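/- arXiv:2508.17308 — 2 statements merged into one kernel-verified Lean document; each statement's English description precedes it below -/
import Mathlib

section
/- Let K ⊂ U be a full compact set which is completely invariant (g⁻¹(K) = K) and satisfies P_g ⊂ K. Then the map g : U' → U has no repelling periodic points outside of K; that is, there is no integer p ≥ 1 and point a ∈ g^{-p}(U) \ K with g^p(a) = a and |(g^p)'(a)| > 1. -/
open Set Function Metric Topology Filter

noncomputable section

/-- A topological disk: a (nonempty, connected) simply connected planar domain. -/
def IsTopDisk (V : Set ℂ) : Prop :=
  IsOpen V ∧ IsConnected V ∧ SimplyConnectedSpace V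

/-- Critical points of `g` lying in `U'`. -/
def critPts (g : ℂ → ℂ) (U' : Set ℂ) : Set ℂ := {z | z ∈ U' ∧ deriv g z = 0}

/-- The postcritical set of `g : U' → U`. -/
def postCrit (g : ℂ → ℂ) (U' : Set ℂ) : Set ℂ :=
  closure (⋃ n : ℕ, g^[n] '' critPts g U')

/-- `g : U' → U` is a proper map: preimages of compact subsets of `U` are compact. -/
def ProperOn (g : ℂ → ℂ) (U' U : Set ℂ) : Prop :=
  ∀ K : Set ℂ, K ⊆ U → IsCompact K → IsCompact (U' ∩ g ⁻¹' K)

/-- `g : U' → U` has degree `d`: every point of `U` has a preimage, and every point of `U`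
which is not a critical value has exactly `d` preimages in `U'`. -/
def HasDeg (g : ℂ → ℂ) (U' U : Set ℂ) (d : ℕ) : Prop :=
  (∀ w ∈ U, (U' ∩ g ⁻¹' {w}).Nonempty) ∧
  ∀ w ∈ U, w ∉ g '' critPts g U' → (U' ∩ g ⁻¹' {w}).ncard = d

/-- Standing assumptions: `U' ⊆ U` are simply connected domains in `ℂ` with `U' ≠ U`,
`g : U' → U` is a proper holomorphic map of degree `d ≥ 2`, all forward iterates of the
critical points are defined, the postcritical set is a compact subset of `U'`, and if the
postcritical set is a singleton `{c}` then `g⁻¹(c) ≠ {c}`. -/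
structure PLSetting (g : ℂ → ℂ) (U' U : Set ℂ) (d : ℕ) : Prop where
  disk' : IsTopDisk U'
  disk : IsTopDisk U
  subset : U' ⊆ U
  ne : U' ≠ U
  two_le_d : 2 ≤ d
  holo : DifferentiableOn ℂ g U'
  mapsTo : MapsTo g U' U
  proper : ProperOn g U' U
  deg : HasDeg g U' U d
  crit_orbit : ∀ c ∈ critPts g U', ∀ n : ℕ, g^[n] c ∈ U'
  postCrit_compact : IsCompact (postCrit g U')
  postCrit_subset : postCrit g U' ⊆ U'
  postCrit_singleton : ∀ c : ℂ, postCrit g U' = {c} → U' ∩ g ⁻¹' {c} ≠ {c}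

/-!
The envelope `ω_W` of the Perron family `admissible K W` is the harmonic measure of `∂W` in `W \ K`.
Taking maxima over the fibres of `g` turns a competitor on `U'` into one on `U`, so
`ω_{U'} ≤ ω_U ∘ g`. As soon as `K` has positive capacity, `ω_U < 1` inside `U`, and since `∂U'`
meets `U` this forces `ω_U < ω_{U'}` on the connected set `U' \ K`. Hence `ω_U` strictly increases
along orbits outside `K`, which is impossible on a cycle.

Capacity is bounded below by the potentials of the balanced preimages of a point of `K` under
iterates of `g ∘ g`: these stay bounded because no point of `K` is totally ramified for `g ∘ g`.
-/

open InnerProductSpace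

section Subharmonic

variable {v w h : ℂ → ℝ} {W W' O B : Set ℂ} {z : ℂ}

theorem exists_analyticAt_re_eventuallyEq (hh : HarmonicAt h z) :
    ∃ F : ℂ → ℂ, AnalyticAt ℂ F z ∧ h =ᶠ[𝓝 z] fun y => (F y).re := by
  obtain ⟨R, hR, hball⟩ := Metric.eventually_nhds_iff_ball.1 hh.eventually
  obtain ⟨F, hF, hFh⟩ := HarmonicOnNhd.exists_analyticOnNhd_ball_re_eq (f := h) hball
  exact ⟨F, hF z (mem_ball_self hR), (hFh.eventuallyEq_of_mem (ball_mem_nhds z hR)).symm⟩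

theorem harmonicAt_comp_analyticAt {g : ℂ → ℂ} (hh : HarmonicAt h (g z)) (hg : AnalyticAt ℂ g z) :
    HarmonicAt (fun x => h (g x)) z := by
  obtain ⟨F, hF, hhF⟩ := exists_analyticAt_re_eventuallyEq hh
  exact (harmonicAt_congr_nhds (hhF.comp_tendsto hg.continuousAt)).2 (hF.comp hg).harmonicAt_re

theorem eventually_eq_of_isLocalMax_of_harmonicAt (hh : HarmonicAt h z) (hmax : IsLocalMax h z) :
    ∀ᶠ y in 𝓝 z, h y = h z := by
  obtain ⟨F, hF, hhF⟩ := exists_analyticAt_re_eventuallyEq hh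
  have hnorm : ∀ᶠ y in 𝓝 z, ‖Complex.exp (F y)‖ = Real.exp (h y) :=
    hhF.mono fun y hy => by rw [Complex.norm_exp, hy]
  have hexp : IsLocalMax (norm ∘ fun y => Complex.exp (F y)) z := by
    filter_upwards [hnorm, hmax] with y hy hyz
    rw [comp_apply, comp_apply, hy, hnorm.self_of_nhds]
    exact Real.exp_le_exp.2 hyz
  have hdiff : ∀ᶠ y in 𝓝 z, DifferentiableAt ℂ (fun y => Complex.exp (F y)) y :=
    hF.eventually_analyticAt.mono fun y hy => hy.differentiableAt.cexp
  filter_upwards [Complex.eventually_eq_of_isLocalMax_norm hdiff hexp, hnorm] with y hy hyn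
  rw [← Real.exp_eq_exp, ← hyn, ← hnorm.self_of_nhds, hy]

/-- Continuous subharmonic functions, characterised by the strong maximum principle for their
differences with harmonic functions; this form is local and stable under gluing and under
push-forward by open maps. -/
def IsSubharmonicOn (v : ℂ → ℝ) (W : Set ℂ) : Prop :=
  ContinuousOn v W ∧ ∀ z ∈ W, ∀ h : ℂ → ℝ, HarmonicAt h z →
    IsLocalMax (fun y => v y - h y) z → ∀ᶠ y in 𝓝 z, v y - h y = v z - h z

namespace IsSubharmonicOn

theorem of_harmonicOnNhd (hv : HarmonicOnNhd v W) : IsSubharmonicOn v W :=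
  ⟨hv.continuousOn, fun z hz _ hh hmax =>
    eventually_eq_of_isLocalMax_of_harmonicAt ((hv z hz).sub hh) hmax⟩

theorem add_harmonicOnNhd (hv : IsSubharmonicOn v W) (hh : HarmonicOnNhd h W) :
    IsSubharmonicOn (fun z => v z + h z) W := by
  refine ⟨hv.1.add hh.continuousOn, fun z hz k hk hmax => ?_⟩
  have hvk := hv.2 z hz (k - h) (hk.sub (hh z hz))
  simp only [Pi.sub_apply, sub_sub_eq_add_sub] at hvk
  exact hvk hmax

theorem mono (hv : IsSubharmonicOn v W) (hW : W' ⊆ W) : IsSubharmonicOn v W' :=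
  ⟨hv.1.mono hW, fun z hz => hv.2 z (hW hz)⟩

theorem le_of_le_on_frontier (hv : IsSubharmonicOn v B) (hB : IsOpen B)
    (hBc : IsCompact (closure B)) (hvc : ContinuousOn v (closure B))
    (hhc : ContinuousOn h (closure B)) (hh : HarmonicOnNhd h B)
    (hle : ∀ z ∈ frontier B, v z ≤ h z) : ∀ z ∈ B, v z ≤ h z := by
  by_contra! hcon
  obtain ⟨z₀, hz₀, hlt⟩ := hcon
  have hfc : ContinuousOn (fun z => v z - h z) (closure B) := hvc.sub hhc
  obtain ⟨m, hmB, hmax⟩ := hBc.exists_isMaxOn ⟨z₀, subset_closure hz₀⟩ hfc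
  have hm : 0 < v m - h m := (sub_pos.2 hlt).trans_le (hmax (subset_closure hz₀))
  set Z := closure B ∩ (fun z => v z - h z) ⁻¹' {v m - h m}
  have hZB : Z ⊆ B := by
    rintro z ⟨hz, hzm⟩
    by_contra hzB
    have := hle z (hB.frontier_eq ▸ ⟨hz, hzB⟩)
    have : v z - h z = v m - h m := hzm
    linarith
  have hZc : IsClosed Z := hfc.preimage_isClosed_of_isClosed isClosed_closure isClosed_singleton
  have hZo : IsOpen Z := by
    refine isOpen_iff_mem_nhds.2 fun z hz => ?_
    have hBz : ∀ᶠ y in 𝓝 z, y ∈ B := hB.mem_nhds (hZB hz)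
    have hzm : v z - h z = v m - h m := hz.2
    have hlocmax : IsLocalMax (fun y => v y - h y) z :=
      hBz.mono fun y hy => (hmax (subset_closure hy)).trans_eq hzm.symm
    filter_upwards [hBz, hv.2 z (hZB hz) h (hh z (hZB hz)) hlocmax] with y hyB hy
    exact ⟨subset_closure hyB, hy.trans hzm⟩
  have hZuniv : Z = univ := IsClopen.eq_univ ⟨hZc, hZo⟩ ⟨m, hmB, rfl⟩
  exact noncompact_univ ℂ (hZuniv ▸ hBc.of_isClosed_subset hZc inter_subset_left)

open Classical in
theorem glue (hv : IsSubharmonicOn v W) (hO : IsOpen O) (hw : IsSubharmonicOn w (W ∩ O))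
    (hwc : ContinuousOn w (W ∩ closure O)) (hle : ∀ z ∈ W ∩ frontier O, w z ≤ v z) :
    IsSubharmonicOn (fun z => if z ∈ O then max (v z) (w z) else v z) W := by
  set V : ℂ → ℝ := fun z => if z ∈ O then max (v z) (w z) else v z with hV
  have hvV (z) : v z ≤ V z := by
    simp only [hV]; split_ifs <;> simp
  have hwV : ∀ z ∈ O, w z ≤ V z := fun z hz => by simp [hV, hz]
  have of_le {u : ℂ → ℝ} {z : ℂ} {h : ℂ → ℝ} (huV : ∀ᶠ y in 𝓝 z, u y ≤ V y) (huz : V z = u z)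
      (hmax : IsLocalMax (fun y => V y - h y) z)
      (hu : IsLocalMax (fun y => u y - h y) z → ∀ᶠ y in 𝓝 z, u y - h y = u z - h z) :
      ∀ᶠ y in 𝓝 z, V y - h y = V z - h z := by
    have humax : IsLocalMax (fun y => u y - h y) z := by
      filter_upwards [huV, hmax] with y h₁ h₂
      linarith
    filter_upwards [hu humax, huV, hmax] with y h₁ h₂ h₃
    linarith
  refine ⟨ContinuousOn.if (fun z hz => max_eq_left (hle z hz))
    ((hv.1.mono inter_subset_left).sup hwc) (hv.1.mono inter_subset_left),
    fun z hz h hh hmax => ?_⟩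
  by_cases hzv : V z = v z
  · exact of_le (.of_forall hvV) hzv hmax (hv.2 z hz h hh)
  · have hzO : z ∈ O := by
      by_contra hzO
      exact hzv (if_neg hzO)
    have hzw : V z = w z := by
      have hVz : V z = max (v z) (w z) := if_pos hzO
      rcases max_choice (v z) (w z) with hmx | hmx
      · exact absurd (hVz.trans hmx) hzv
      · exact hVz.trans hmx
    exact of_le (hO.eventually_mem hzO |>.mono hwV) hzw hmax (hw.2 z ⟨hz, hzO⟩ h hh)

end IsSubharmonicOn

end Subharmonic

section PushForward

variable {g : ℂ → ℂ} {U U' : Set ℂ} {v : ℂ → ℝ}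

theorem ProperOn.isCompact_fiber (hg : ProperOn g U' U) {y : ℂ} (hy : y ∈ U) :
    IsCompact (U' ∩ g ⁻¹' {y}) :=
  hg {y} (singleton_subset_iff.2 hy) isCompact_singleton

theorem ProperOn.closure_image_inter_subset (hg : ProperOn g U' U) (hU : IsOpen U)
    (hgc : ContinuousOn g U') {A : Set ℂ} (hA : A ⊆ U')
    (hAc : closure A ∩ U' ⊆ A) : closure (g '' A) ∩ U ⊆ g '' A := by
  rintro y ⟨hy, hyU⟩
  obtain ⟨R, hR, hRU⟩ := nhds_basis_closedBall.mem_iff.1 (hU.mem_nhds hyU)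
  have hcpt : IsCompact (U' ∩ g ⁻¹' closedBall y R) := hg _ hRU (isCompact_closedBall y R)
  have hAcl : closure A ∩ (U' ∩ g ⁻¹' closedBall y R) ⊆ A := fun x hx => hAc ⟨hx.1, hx.2.1⟩
  have himg : IsClosed (g '' (closure A ∩ (U' ∩ g ⁻¹' closedBall y R))) :=
    ((hcpt.inter_left isClosed_closure).image_of_continuousOn
      (hgc.mono fun x hx => hx.2.1)).isClosed
  by_contra hyA
  have hnhds : (g '' (closure A ∩ (U' ∩ g ⁻¹' closedBall y R)))ᶜ ∩ closedBall y R ∈ 𝓝 y :=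
    inter_mem (himg.isOpen_compl.mem_nhds fun hmem => hyA (image_mono hAcl hmem))
      (closedBall_mem_nhds y hR)
  obtain ⟨_, ⟨hnot, hball⟩, x, hx, rfl⟩ := mem_closure_iff_nhds.1 hy _ hnhds
  exact hnot ⟨x, ⟨subset_closure hx, hA hx, hball⟩, rfl⟩

/-- The push-forward of `v` along `g : U' → ℂ`: the maximum of `v` over the fibres. -/
def fiberMax (g : ℂ → ℂ) (U' : Set ℂ) (v : ℂ → ℝ) (y : ℂ) : ℝ :=
  sSup (v '' (U' ∩ g ⁻¹' {y}))

theorem le_fiberMax (hprop : ProperOn g U' U) (hmaps : MapsTo g U' U) (hv : ContinuousOn v U')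
    {x : ℂ} (hx : x ∈ U') : v x ≤ fiberMax g U' v (g x) :=
  le_csSup ((hprop.isCompact_fiber (hmaps hx)).bddAbove_image (hv.mono inter_subset_left))
    ⟨x, ⟨hx, rfl⟩, rfl⟩

theorem exists_fiberMax_eq (hprop : ProperOn g U' U)
    (hsurj : ∀ y ∈ U, (U' ∩ g ⁻¹' {y}).Nonempty) (hv : ContinuousOn v U') {y : ℂ} (hy : y ∈ U) :
    ∃ x ∈ U', g x = y ∧ fiberMax g U' v y = v x := by
  obtain ⟨x, ⟨hx, hgx⟩, hmax, -⟩ := (hprop.isCompact_fiber hy).exists_sSup_image_eq_and_ge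
    (hsurj y hy) (hv.mono inter_subset_left)
  exact ⟨x, hx, hgx, hmax⟩

theorem continuousOn_fiberMax (hU : IsOpen U) (hU' : IsOpen U') (hg : ContinuousOn g U')
    (hprop : ProperOn g U' U) (hmaps : MapsTo g U' U)
    (hsurj : ∀ y ∈ U, (U' ∩ g ⁻¹' {y}).Nonempty) (hopen : ∀ z ∈ U', 𝓝 (g z) ≤ map g (𝓝 z))
    (hv : ContinuousOn v U') : ContinuousOn (fiberMax g U' v) U := by
  refine fun y hy => ContinuousAt.continuousWithinAt
    (continuousAt_iff_lower_upperSemicontinuousAt.2 ⟨fun a ha => ?_, fun a ha => ?_⟩)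
  · obtain ⟨x, hx, rfl, hmax⟩ := exists_fiberMax_eq hprop hsurj hv hy
    have hnear : ∀ᶠ x' in 𝓝 x, a < v x' ∧ x' ∈ U' :=
      ((hv.continuousAt (hU'.mem_nhds hx)).eventually (lt_mem_nhds (hmax ▸ ha))).and
        (hU'.mem_nhds hx)
    filter_upwards [hopen x hx (image_mem_map hnear)]
    rintro _ ⟨x', ⟨hax, hx'⟩, rfl⟩
    exact hax.trans_le (le_fiberMax hprop hmaps hv hx')
  · set A := U' ∩ v ⁻¹' Ici a
    have hAc : closure A ∩ U' ⊆ A := by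
      obtain ⟨F, hF, hFA⟩ := continuousOn_iff_isClosed.1 hv _ (isClosed_Ici (a := a))
      rintro x ⟨hx, hxU⟩
      have hxF : x ∈ F := closure_minimal (fun t ht => (hFA ▸ ⟨ht.2, ht.1⟩ : t ∈ F ∩ U').1) hF hx
      exact ⟨hxU, (hFA.symm ▸ ⟨hxF, hxU⟩ : x ∈ v ⁻¹' Ici a ∩ U').1⟩
    have hcl := hprop.closure_image_inter_subset hU hg inter_subset_left hAc
    have hyA : y ∉ closure (g '' A) := fun hmem => by
      obtain ⟨x, ⟨hx, hax⟩, rfl⟩ := hcl ⟨hmem, hy⟩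
      exact (((le_fiberMax hprop hmaps hv hx).trans_lt ha).not_ge hax)
    filter_upwards [isClosed_closure.isOpen_compl.mem_nhds hyA, hU.mem_nhds hy] with t ht htU
    obtain ⟨x, hx, rfl, hmax⟩ := exists_fiberMax_eq hprop hsurj hv htU
    rw [hmax]
    by_contra! hax
    exact ht (subset_closure ⟨x, ⟨hx, hax⟩, rfl⟩)

theorem IsSubharmonicOn.fiberMax (hU : IsOpen U) (hU' : IsOpen U') (hg : DifferentiableOn ℂ g U')
    (hprop : ProperOn g U' U) (hmaps : MapsTo g U' U)
    (hsurj : ∀ y ∈ U, (U' ∩ g ⁻¹' {y}).Nonempty) (hopen : ∀ z ∈ U', 𝓝 (g z) ≤ map g (𝓝 z))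
    (hv : IsSubharmonicOn v U') : IsSubharmonicOn (fiberMax g U' v) U := by
  refine ⟨continuousOn_fiberMax hU hU' hg.continuousOn hprop hmaps hsurj hopen hv.1,
    fun y hy h hh hmax => ?_⟩
  obtain ⟨x, hx, rfl, hvx⟩ := exists_fiberMax_eq hprop hsurj hv.1 hy
  have hga : AnalyticAt ℂ g x := hg.analyticAt (hU'.mem_nhds hx)
  have hle : ∀ᶠ t in 𝓝 x, v t ≤ _root_.fiberMax g U' v (g t) :=
    (hU'.eventually_mem hx).mono fun t => le_fiberMax hprop hmaps hv.1
  have hmax' : IsLocalMax (fun t => v t - h (g t)) x := by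
    filter_upwards [hle, hga.continuousAt.eventually hmax] with t h₁ h₂
    linarith
  have hconst := hv.2 x hx _ (harmonicAt_comp_analyticAt hh hga) hmax'
  filter_upwards [hopen x hx (image_mem_map (hconst.and hle)), hmax]
  rintro _ ⟨t, ⟨h₁, h₂⟩, rfl⟩ h₃
  linarith

end PushForward

section Roots

variable {f : ℂ → ℂ} {V : Set ℂ}

theorem exists_differentiableOn_exp_eq (hV : IsSimplyConnected V) (hVo : IsOpen V)
    (hf : DifferentiableOn ℂ f V) (hf0 : ∀ z ∈ V, f z ≠ 0) :
    ∃ L : ℂ → ℂ, DifferentiableOn ℂ L V ∧ ∀ z ∈ V, Complex.exp (L z) = f z := by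
  obtain ⟨L, hLc, hL⟩ := Complex.exists_continuousOn_eqOn_exp_comp hV hVo hf.continuousOn
    (by rintro ⟨z, hz, h⟩; exact hf0 z hz h)
  refine ⟨L, fun z hz => DifferentiableAt.differentiableWithinAt ?_, hL⟩
  have hclose : ∀ᶠ y in 𝓝 z, ‖L y - L z‖ < Real.pi :=
    ((hLc.continuousAt (hVo.mem_nhds hz)).eventually (ball_mem_nhds (L z) Real.pi_pos)).mono
      fun y hy => by simpa [dist_eq_norm] using hy
  have hlog : L =ᶠ[𝓝 z] fun y => L z + Complex.log (f y / f z) := by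
    filter_upwards [hclose, hVo.mem_nhds hz] with y hy hyV
    have him := abs_lt.1 ((Complex.abs_im_le_norm _).trans_lt hy)
    rw [← hL hyV, ← hL hz, comp_apply, comp_apply, ← Complex.exp_sub,
      Complex.log_exp him.1 him.2.le, add_sub_cancel]
  refine DifferentiableAt.congr_of_eventuallyEq ?_ hlog
  have hfz : DifferentiableAt ℂ f z := hf.differentiableAt (hVo.mem_nhds hz)
  exact ((hfz.div_const _).clog (by simp [div_self (hf0 z hz)])).const_add _

theorem exists_differentiableOn_pow_eq (hV : IsSimplyConnected V) (hVo : IsOpen V)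
    (hf : DifferentiableOn ℂ f V) (hf0 : ∀ z ∈ V, f z ≠ 0) {n : ℕ} (hn : n ≠ 0) :
    ∃ F : ℂ → ℂ, DifferentiableOn ℂ F V ∧ ∀ z ∈ V, F z ^ n = f z := by
  obtain ⟨L, hLd, hL⟩ := exists_differentiableOn_exp_eq hV hVo hf hf0
  refine ⟨fun z => Complex.exp (L z / n), (hLd.div_const _).cexp, fun z hz => ?_⟩
  rw [← Complex.exp_nat_mul, mul_div_cancel₀ _ (Nat.cast_ne_zero.2 hn), hL z hz]

end Roots

section Barrier

variable {V : Set ℂ} {q : ℂ} {ξ : ℂ → ℂ}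

theorem exists_ball_disjoint_neg_sqrt_image (hV : IsOpen V) (hξd : DifferentiableOn ℂ ξ V)
    (hq : q ∉ V) (hξ : ∀ z ∈ V, ξ z ^ 2 = z - q) {z₁ : ℂ} (hz₁ : z₁ ∈ V) :
    ∃ ε > 0, ∀ z ∈ V, ε ≤ ‖ξ z + ξ z₁‖ := by
  have hnonconst : ¬ ∀ᶠ y in 𝓝 z₁, ξ y = ξ z₁ := fun hconst => by
    have hsub : (fun z => z - q) =ᶠ[𝓝 z₁] fun _ => z₁ - q := by
      filter_upwards [hconst, hV.mem_nhds hz₁] with y hy hyV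
      rw [← hξ y hyV, ← hξ z₁ hz₁, hy]
    simpa using hsub.deriv_eq
  have hopen : ξ '' V ∈ 𝓝 (ξ z₁) :=
    (hξd.analyticAt (hV.mem_nhds hz₁)).eventually_constant_or_nhds_le_map_nhds.resolve_left
      hnonconst (image_mem_map (hV.mem_nhds hz₁))
  obtain ⟨ε, hε, hball⟩ := Metric.mem_nhds_iff.1 hopen
  refine ⟨ε, hε, fun z hz => ?_⟩
  by_contra! hlt
  obtain ⟨y, hy, hyz⟩ := hball (show -ξ z ∈ ball (ξ z₁) ε by
    rwa [mem_ball, dist_eq_norm, ← norm_neg, neg_sub, sub_neg_eq_add, add_comm])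
  have hyz' : y = z := by
    linear_combination hξ z hz - hξ y hy + (ξ y - ξ z) * hyz
  subst hyz'
  have hξ0 : ξ y = 0 := self_eq_neg.1 hyz
  have hyq : y - q = 0 := by rw [← hξ y hz, hξ0, zero_pow two_ne_zero]
  exact hq (sub_eq_zero.1 hyq ▸ hz)

theorem re_div_add_sub_half {a b : ℂ} (hab : a + b ≠ 0) :
    (b / (a + b)).re - 1 / 2 = (‖b‖ ^ 2 - ‖a‖ ^ 2) / (2 * ‖a + b‖ ^ 2) := by
  have hsq : Complex.normSq (a + b) ≠ 0 := Complex.normSq_eq_zero.not.2 hab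
  rw [← Complex.normSq_eq_norm_sq, ← Complex.normSq_eq_norm_sq, ← Complex.normSq_eq_norm_sq,
    Complex.div_re]
  field_simp
  simp only [Complex.normSq_apply, Complex.add_re, Complex.add_im]
  ring

-- With `ξ = √(z - q)`, the map `ξ ↦ b / (ξ + b)` sends the disc `‖ξ‖ < ‖b‖` to the half-plane
-- `1 / 2 < re`; a branch of `ξ` stays away from `-b` once it takes the value `b`.
theorem exists_harmonic_barrier (hV : IsSimplyConnected V) (hVo : IsOpen V) (hq : q ∉ V)
    (hqV : q ∈ closure V) {R : ℝ} (hR : 0 < R) :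
    ∃ r < R, ∃ h : ℂ → ℝ, (V ∩ ball q r).Nonempty ∧ HarmonicOnNhd h V ∧
      (∀ z ∈ V, h z ≤ 1) ∧ (∀ z ∈ V ∩ sphere q r, h z = 0) ∧ ∀ z ∈ V ∩ ball q r, 0 < h z := by
  have hne (z) (hz : z ∈ V) : z - q ≠ 0 := sub_ne_zero.2 fun h => hq (h ▸ hz)
  obtain ⟨ξ, hξd, hξ⟩ := exists_differentiableOn_pow_eq hV hVo
    (f := fun z => z - q) (by fun_prop) hne two_ne_zero
  obtain ⟨z₁, hz₁, hd⟩ := Metric.mem_closure_iff.1 hqV R hR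
  obtain ⟨ε, hε, hmiss⟩ := exists_ball_disjoint_neg_sqrt_image hVo hξd hq hξ hz₁
  set r := ‖z₁ - q‖ with hr
  have hr0 : 0 < r := norm_pos_iff.2 (hne z₁ hz₁)
  have hnorm (z) (hz : z ∈ V) : ‖ξ z‖ ^ 2 = ‖z - q‖ := by rw [← norm_pow, hξ z hz]
  have hden (z) (hz : z ∈ V) : ξ z + ξ z₁ ≠ 0 := norm_pos_iff.1 (hε.trans_le (hmiss z hz))
  set k : ℂ → ℝ := fun z => (ξ z₁ / (ξ z + ξ z₁) - 1 / 2).re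
  have hk (z) (hz : z ∈ V) : k z = (r - ‖z - q‖) / (2 * ‖ξ z + ξ z₁‖ ^ 2) := by
    simp only [k, hr]
    rw [← hnorm z hz, ← hnorm z₁ hz₁, ← re_div_add_sub_half (hden z hz), Complex.sub_re]
    norm_num
  have hkh : HarmonicOnNhd k V := fun z hz => AnalyticAt.harmonicAt_re
    (((analyticAt_const).div ((hξd.analyticAt (hVo.mem_nhds hz)).add analyticAt_const)
      (hden z hz)).sub analyticAt_const)
  have hc : 0 < 2 * ε ^ 2 / r := by positivity
  have hpos (z) (hz : z ∈ V) : 0 < 2 * ‖ξ z + ξ z₁‖ ^ 2 := by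
    have := norm_pos_iff.2 (hden z hz); positivity
  refine ⟨r, by rwa [hr, ← dist_eq_norm, dist_comm], (2 * ε ^ 2 / r) • k, ?_,
    fun z hz => (hkh z hz).const_smul, fun z hz => ?_, fun z hz => ?_, fun z hz => ?_⟩
  · obtain ⟨z, hz, hzr⟩ := Metric.mem_closure_iff.1 hqV r hr0
    exact ⟨z, hz, by rwa [mem_ball, dist_comm]⟩
  · have hsq : ε ^ 2 ≤ ‖ξ z + ξ z₁‖ ^ 2 := pow_le_pow_left₀ hε.le (hmiss z hz) 2
    rw [Pi.smul_apply, smul_eq_mul, hk z hz, div_mul_div_comm,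
      div_le_one (mul_pos hr0 (hpos z hz))]
    nlinarith [norm_nonneg (z - q), sq_nonneg ε]
  · have hzr : ‖z - q‖ = r := mem_sphere_iff_norm.1 hz.2
    simp [hk z hz.1, hzr]
  · have hzr : ‖z - q‖ < r := mem_ball_iff_norm.1 hz.2
    rw [Pi.smul_apply, smul_eq_mul, hk z hz.1]
    exact mul_pos hc (div_pos (sub_pos.2 hzr) (hpos z hz.1))

end Barrier

section Gain

variable {E W : Set ℂ} {𝓕 : Set (ℂ → ℝ)} {e q z : ℂ} {ϱ δ R : ℝ}

/-- The Perron family whose upper envelope is the harmonic measure of `∂W` in `W \ E`. -/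
def admissible (E W : Set ℂ) : Set (ℂ → ℝ) :=
  {v | IsSubharmonicOn v W ∧ (∀ z ∈ W, v z ≤ 1) ∧ ∀ z ∈ E, v z ≤ 0}

/-- The points near which the envelope of `admissible E W` exceeds every member of `𝓕` by a
uniform positive amount. The competitor `v'` is required to dominate `v` on all of `W` so that it
can be improved further by gluing. -/
def gainSet (𝓕 : Set (ℂ → ℝ)) (E W : Set ℂ) : Set ℂ :=
  {z | ∃ δ > 0, ∃ r > 0, ∀ v ∈ 𝓕, ∃ v' ∈ admissible E W,
    (∀ x ∈ W, v x ≤ v' x) ∧ ∀ y ∈ ball z r, v y + δ ≤ v' y}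

theorem isOpen_gainSet : IsOpen (gainSet 𝓕 E W) := by
  refine Metric.isOpen_iff.2 fun z ⟨δ, hδ, r, hr, hgain⟩ => ⟨r / 2, by positivity, fun y hy => ?_⟩
  have hsub : ball y (r / 2) ⊆ ball z r := ball_subset_ball' (by rw [mem_ball] at hy; linarith)
  refine ⟨δ, hδ, r / 2, by positivity, fun v hv => ?_⟩
  obtain ⟨v', hv', hle, hlt⟩ := hgain v hv
  exact ⟨v', hv', hle, fun x hx => hlt x (hsub hx)⟩

open Classical in
theorem mem_gainSet_of_barrier {O : Set ℂ} {k : ℂ → ℝ} (hW : IsOpen W) (hO : IsOpen O)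
    (hOE : Disjoint O E) (hk : HarmonicOnNhd k (W ∩ closure O)) (hz : z ∈ W ∩ O) (hkz : 0 < k z)
    (h𝓕 : ∀ v ∈ 𝓕, IsSubharmonicOn v W ∧ (∀ x ∈ W ∩ O, v x + k x ≤ 1) ∧
      ∃ v' ∈ admissible E W, (∀ x ∈ W, v x ≤ v' x) ∧ ∀ x ∈ W ∩ frontier O, v x + k x ≤ v' x) :
    z ∈ gainSet 𝓕 E W := by
  have hWO : W ∩ O ∈ 𝓝 z := (hW.inter hO).mem_nhds hz
  have hsub : W ∩ O ⊆ W ∩ closure O := inter_subset_inter_right W subset_closure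
  have hkc : ContinuousAt k z := hk.continuousOn.continuousAt (mem_of_superset hWO hsub)
  obtain ⟨r, hr, hball⟩ := Metric.eventually_nhds_iff_ball.1
    ((hkc.eventually (lt_mem_nhds (half_lt_self hkz))).and (hO.eventually_mem hz.2))
  refine ⟨k z / 2, half_pos hkz, r, hr, fun v hv => ?_⟩
  obtain ⟨hvW, hle1, v', hv', hle, hfr⟩ := h𝓕 v hv
  refine ⟨fun x => if x ∈ O then max (v' x) (v x + k x) else v' x, ⟨?_, ?_, ?_⟩, ?_, ?_⟩
  · exact hv'.1.glue hO
      ((hvW.mono inter_subset_left).add_harmonicOnNhd fun x hx => hk x (hsub hx))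
      ((hvW.1.mono inter_subset_left).add hk.continuousOn) hfr
  · intro x hx
    beta_reduce
    split_ifs with hxO
    exacts [max_le (hv'.2.1 x hx) (hle1 x ⟨hx, hxO⟩), hv'.2.1 x hx]
  · intro x hx
    beta_reduce
    rw [if_neg (hOE.notMem_of_mem_right hx)]
    exact hv'.2.2 x hx
  · intro x hx
    beta_reduce
    split_ifs
    exacts [(hle x hx).trans (le_max_left _ _), hle x hx]
  · intro x hx
    beta_reduce
    rw [if_pos (hball x hx).2]
    exact le_max_of_le_right (by linarith [(hball x hx).1])

/-- The annulus `r < ‖z - e‖ < ϱ`. -/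
def annulus (e : ℂ) (r ϱ : ℝ) : Set ℂ := ball e ϱ \ closedBall e r

theorem isOpen_annulus {r : ℝ} : IsOpen (annulus e r ϱ) := isOpen_ball.sdiff isClosed_closedBall

theorem closure_annulus_subset {r : ℝ} : closure (annulus e r ϱ) ⊆ closedBall e ϱ \ ball e r :=
  closure_minimal (sdiff_subset_sdiff ball_subset_closedBall ball_subset_closedBall)
    (isClosed_closedBall.sdiff isOpen_ball)

theorem frontier_annulus_subset {r : ℝ} :
    frontier (annulus e r ϱ) ⊆ sphere e r ∪ sphere e ϱ := by
  intro z hz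
  rw [isOpen_annulus.frontier_eq] at hz
  obtain ⟨hϱ, hr⟩ := closure_annulus_subset hz.1
  by_contra! hcon
  simp only [mem_union, mem_sphere, not_or, mem_closedBall, mem_ball, not_lt] at hcon hϱ hr
  exact hz.2 ⟨lt_of_le_of_ne hϱ hcon.2, fun h => hcon.1 (le_antisymm h hr)⟩

/-- The harmonic function on the punctured plane with value `0` on `sphere e ϱ` and `1` on
`sphere e r`. -/
def logRatio (e : ℂ) (r ϱ : ℝ) (z : ℂ) : ℝ :=
  (Real.log ϱ - Real.log ‖z - e‖) / (Real.log ϱ - Real.log r)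

theorem harmonicAt_log_norm_sub (hz : z ≠ e) : HarmonicAt (fun y => Real.log ‖y - e‖) z :=
  AnalyticAt.harmonicAt_log_norm (by fun_prop) (sub_ne_zero.2 hz)

theorem harmonicAt_logRatio {r : ℝ} (hz : z ≠ e) : HarmonicAt (logRatio e r ϱ) z := by
  have h := ((harmonicAt_const (Real.log ϱ)).sub (harmonicAt_log_norm_sub hz)).const_smul
    (c := (Real.log ϱ - Real.log r)⁻¹)
  refine (harmonicAt_congr_nhds (.of_forall fun y => ?_)).1 h
  simp [logRatio, div_eq_inv_mul]

theorem ball_subset_gainSet (h𝓕 : ∀ v ∈ 𝓕, IsSubharmonicOn v W) (hW : IsOpen W)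
    (hϱ : closedBall e ϱ ⊆ W \ E) (he : e ∈ gainSet 𝓕 E W) : ball e ϱ ⊆ gainSet 𝓕 E W := by
  intro z hz
  obtain ⟨δ, hδ, r₀, hr₀, hgain⟩ := he
  rcases lt_or_ge (dist z e) (r₀ / 2) with hzr | hzr
  · refine ⟨δ, hδ, r₀ / 2, by positivity, fun v hv => ?_⟩
    obtain ⟨v', hv', hle, hlt⟩ := hgain v hv
    exact ⟨v', hv', hle, fun y hy => hlt y (ball_subset_ball' (by linarith) hy)⟩
  obtain ⟨r, hr, hrr₀⟩ : ∃ r, 0 < r ∧ r < r₀ / 2 := exists_between (by positivity)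
  have hrz : r < dist z e := hrr₀.trans_le hzr
  have hlog : 0 < Real.log ϱ - Real.log r := sub_pos.2 (Real.log_lt_log hr (hrz.trans hz))
  set k := δ • logRatio e r ϱ
  have hzA : z ∈ annulus e r ϱ := ⟨hz, by simpa using hrz⟩
  have hkz : 0 < k z := mul_pos hδ (div_pos (sub_pos.2 (by
    rw [← dist_eq_norm]; exact Real.log_lt_log (hr.trans hrz) hz)) hlog)
  have hclW : closure (annulus e r ϱ) ⊆ W := fun y hy => (hϱ (closure_annulus_subset hy).1).1
  have hk : HarmonicOnNhd k (closure (annulus e r ϱ)) := fun y hy =>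
    (harmonicAt_logRatio (ne_of_mem_of_not_mem (mem_ball_self hr)
      (closure_annulus_subset hy).2).symm).const_smul
  refine mem_gainSet_of_barrier hW isOpen_annulus (Set.disjoint_left.2 fun y hy =>
    (hϱ (ball_subset_closedBall hy.1)).2) (fun y hy => hk y hy.2)
    ⟨hclW (subset_closure hzA), hzA⟩ hkz fun v hv => ?_
  obtain ⟨v', hv', hle, hlt⟩ := hgain v hv
  have hfr : ∀ y ∈ frontier (annulus e r ϱ), v y + k y ≤ v' y := by
    intro y hy
    simp only [k, Pi.smul_apply, smul_eq_mul, logRatio]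
    rcases frontier_annulus_subset hy with hyr | hyϱ
    · rw [mem_sphere_iff_norm.1 hyr, div_self hlog.ne', mul_one]
      exact hlt y (by rw [mem_ball, mem_sphere.1 hyr]; linarith)
    · rw [mem_sphere_iff_norm.1 hyϱ, sub_self, zero_div, mul_zero, add_zero]
      exact hle y (hclW hy.1)
  have hle1 : ∀ y ∈ annulus e r ϱ, v y + k y ≤ 1 := by
    refine (((h𝓕 v hv).mono (subset_closure.trans hclW)).add_harmonicOnNhd
      fun y hy => hk y (subset_closure hy)).le_of_le_on_frontier isOpen_annulus
      ((isCompact_closedBall e ϱ).of_isClosed_subset isClosed_closure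
        (closure_annulus_subset.trans sdiff_subset)) (((h𝓕 v hv).1.mono hclW).add hk.continuousOn)
      continuousOn_const (fun y _ => harmonicAt_const _) fun y hy => ?_
    exact (hfr y hy).trans (hv'.2.1 y (hclW hy.1))
  exact ⟨h𝓕 v hv, fun y hy => hle1 y hy.2, v', hv', hle, fun y hy => hfr y hy.2⟩

theorem diff_subset_gainSet (h𝓕 : ∀ v ∈ 𝓕, IsSubharmonicOn v W) (hW : IsOpen W)
    (hE : IsClosed E) (hWc : IsPreconnected (W \ E)) (hmeet : (W \ E ∩ gainSet 𝓕 E W).Nonempty) :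
    W \ E ⊆ gainSet 𝓕 E W := by
  refine hWc.subset_of_closure_inter_subset isOpen_gainSet hmeet fun z hz => ?_
  obtain ⟨ϱ, hϱ, hball⟩ := nhds_basis_closedBall.mem_iff.1 ((hW.sdiff hE).mem_nhds hz.2)
  obtain ⟨e, he, hze⟩ := Metric.mem_closure_iff.1 hz.1 (ϱ / 2) (by positivity)
  rw [dist_comm] at hze
  have hsub : closedBall e (ϱ / 2) ⊆ W \ E :=
    (closedBall_subset_closedBall' (by linarith)).trans hball
  exact ball_subset_gainSet h𝓕 hW hsub he (mem_ball'.2 hze)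

theorem gainSet_nonempty_of_le_one_sub (hV : IsSimplyConnected W) (hW : IsOpen W)
    (h𝓕 : 𝓕 ⊆ admissible E W) (hq : q ∉ W) (hqW : q ∈ closure W) (hR : 0 < R) (hδ : 0 < δ)
    (hE : Disjoint (ball q R) E) (hle : ∀ v ∈ 𝓕, ∀ z ∈ W ∩ ball q R, v z ≤ 1 - δ) :
    (W \ E ∩ gainSet 𝓕 E W).Nonempty := by
  obtain ⟨r, hrR, h, ⟨z, hzW, hzr⟩, hh, hh1, hh0, hhpos⟩ := exists_harmonic_barrier hV hW hq hqW hR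
  have hballR : ball q r ⊆ ball q R := ball_subset_ball hrR.le
  refine ⟨z, ⟨hzW, hE.notMem_of_mem_left (hballR hzr)⟩, mem_gainSet_of_barrier (k := δ • h) hW
    isOpen_ball (hE.mono_left hballR) (fun y hy => (hh y hy.1).const_smul) ⟨hzW, hzr⟩
    (mul_pos hδ (hhpos z ⟨hzW, hzr⟩)) fun v hv => ⟨(h𝓕 hv).1, fun y hy => ?_, v, h𝓕 hv,
    fun _ _ => le_rfl, fun y hy => ?_⟩⟩
  · have := mul_le_mul_of_nonneg_left (hh1 y hy.1) hδ.le
    simp only [Pi.smul_apply, smul_eq_mul]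
    linarith [hle v hv y ⟨hy.1, hballR hy.2⟩]
  · simp [hh0 y ⟨hy.1, frontier_ball_subset_sphere hy.2⟩]

end Gain

section PlaneTopology

theorem isSimplyConnected_univ_complex : IsSimplyConnected (univ : Set ℂ) := by
  have : ContractibleSpace (univ : Set ℂ) := convex_univ.contractibleSpace univ_nonempty
  exact SimplyConnectedSpace.ofContractible _

theorem exists_int_eqOn_add_of_exp_eq {X : Type*} [TopologicalSpace X] {S : Set X}
    (hS : IsPreconnected S) {a b : X → ℂ} (ha : ContinuousOn a S) (hb : ContinuousOn b S)
    (hab : ∀ z ∈ S, Complex.exp (a z) = Complex.exp (b z)) :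
    ∃ n : ℤ, ∀ z ∈ S, a z = b z + n * (2 * Real.pi * Complex.I) := by
  rcases S.eq_empty_or_nonempty with rfl | ⟨z₀, hz₀⟩
  · exact ⟨0, fun z hz => hz.elim⟩
  obtain ⟨n, hn⟩ := Complex.exp_eq_exp_iff_exists_int.1 (hab z₀ hz₀)
  refine ⟨n, Complex.isCoveringMap_exp.eqOn_of_comp_eqOn hS ha (hb.add continuousOn_const)
    (fun z hz => Subtype.ext ?_) hz₀ hn⟩
  exact (hab z hz).trans (Complex.exp_eq_exp_iff_exists_int.2 ⟨-n, by push_cast; ring⟩)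

theorem continuousOn_mul_of_norm_le_one {X : Type*} [TopologicalSpace X] {A B : Set X}
    {k φ : X → ℂ} (hA : IsOpen A) (hB : IsOpen B) (hk : Continuous k) (hk0 : ∀ x ∉ B, k x = 0)
    (hφ : ContinuousOn φ (A ∩ B)) (hφ1 : ∀ x, ‖φ x‖ ≤ 1) :
    ContinuousOn (fun x => k x * φ x) A := by
  refine fun x hx => ContinuousAt.continuousWithinAt ?_
  by_cases hxB : x ∈ B
  · exact hk.continuousAt.mul (hφ.continuousAt ((hA.inter hB).mem_nhds ⟨hx, hxB⟩))
  · have hk0' : Tendsto k (𝓝 x) (𝓝 0) := hk0 x hxB ▸ hk.tendsto x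
    have hlim : Tendsto (fun y => k y * φ y) (𝓝 x) (𝓝 0) :=
      hk0'.zero_mul_isBoundedUnder_le ⟨1, eventually_map.2 (.of_forall hφ1)⟩
    simpa [ContinuousAt, hk0 x hxB] using hlim

-- A locally constant `φ : A ∩ B → {0, 1}` is a cocycle, split by a partition of unity as
-- `φ = (1 - χ) φ - (-χ φ)`; the common value of `exp (2πi ·)` on both summands is an entire
-- nonvanishing function, whose logarithm forces `φ` to be constant.
theorem isPreconnected_inter_of_union_eq_univ {A B : Set ℂ} (hAo : IsOpen A) (hBo : IsOpen B)
    (hA : IsPreconnected A) (hB : IsPreconnected B) (hAB : A ∪ B = univ) :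
    IsPreconnected (A ∩ B) := by
  refine isPreconnected_of_forall_constant fun f hf x hx y hy => ?_
  obtain ⟨χ, hχ0, hχ1, -⟩ := exists_continuous_zero_one_of_isClosed hAo.isClosed_compl
    hBo.isClosed_compl (disjoint_compl_left_iff_subset.2 (compl_subset_iff_union.2 hAB)).symm
  have hχ : Continuous fun z => (χ z : ℂ) := Complex.continuous_ofReal.comp χ.continuous
  set φ : ℂ → ℂ := fun z => if f z then 1 else 0 with hφ
  have hφc : ContinuousOn φ (A ∩ B) := (continuous_of_discreteTopology
    (f := fun b : Bool => if b then (1 : ℂ) else 0)).comp_continuousOn hf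
  have hφ1 (z) : ‖φ z‖ ≤ 1 := by simp only [hφ]; split_ifs <;> simp
  set α : ℂ → ℂ := fun z => (1 - χ z) * φ z * (2 * Real.pi * Complex.I)
  set β : ℂ → ℂ := fun z => -χ z * φ z * (2 * Real.pi * Complex.I)
  have hα : ContinuousOn α A := (continuousOn_mul_of_norm_le_one hAo hBo (continuous_const.sub hχ)
    (fun z hz => by simp [hχ1 hz]) hφc hφ1).mul continuousOn_const
  have hβ : ContinuousOn β B := (continuousOn_mul_of_norm_le_one hBo hAo hχ.neg
    (fun z hz => by simp [hχ0 hz]) (inter_comm A B ▸ hφc) hφ1).mul continuousOn_const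
  have hαβ (z) : Complex.exp (α z) = Complex.exp (β z) := by
    refine Complex.exp_eq_exp_iff_exists_int.2 ⟨if f z then 1 else 0, ?_⟩
    simp only [α, β, hφ]
    split_ifs <;> push_cast <;> ring
  have hexp : Continuous fun z => Complex.exp (α z) := by
    refine continuous_iff_continuousAt.2 fun z => ?_
    rcases (hAB ▸ mem_univ z : z ∈ A ∪ B) with hz | hz
    · exact (hα.continuousAt (hAo.mem_nhds hz)).cexp
    · simpa only [hαβ] using (hβ.continuousAt (hBo.mem_nhds hz)).cexp
  obtain ⟨ψ, hψc, hψ⟩ := Complex.exists_continuousOn_eqOn_exp_comp isSimplyConnected_univ_complex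
    isOpen_univ hexp.continuousOn (by rintro ⟨z, -, hz⟩; exact Complex.exp_ne_zero _ hz)
  obtain ⟨n, hn⟩ := exists_int_eqOn_add_of_exp_eq hA (hψc.mono (subset_univ _)) hα
    fun z _ => hψ (mem_univ z)
  obtain ⟨m, hm⟩ := exists_int_eqOn_add_of_exp_eq hB (hψc.mono (subset_univ _)) hβ
    fun z _ => (hψ (mem_univ z)).trans (hαβ z)
  have hconst : ∀ z ∈ A ∩ B, φ z = m - n := fun z hz => by
    refine mul_right_cancel₀ Complex.two_pi_I_ne_zero ?_
    linear_combination hm z hz.2 - hn z hz.1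
  have hxy : φ x = φ y := (hconst x hx).trans (hconst y hy).symm
  simp only [hφ] at hxy
  cases hfx : f x <;> cases hfy : f y <;> simp [hfx, hfy] at hxy ⊢

end PlaneTopology

section Openness

theorem nhds_le_map_nhds_of_surjective {g : ℂ → ℂ} {U' U : Set ℂ} (hU' : IsOpen U')
    (hU'c : IsPreconnected U') (hU : IsOpen U) (hUne : U.Nonempty) (hg : DifferentiableOn ℂ g U')
    (hsurj : ∀ w ∈ U, (U' ∩ g ⁻¹' {w}).Nonempty) : ∀ z ∈ U', 𝓝 (g z) ≤ map g (𝓝 z) := by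
  intro z hz
  have han := hg.analyticOnNhd hU'
  refine (han z hz).eventually_constant_or_nhds_le_map_nhds.resolve_left fun hconst => ?_
  have hgz : EqOn g (fun _ => g z) U' :=
    han.eqOn_of_preconnected_of_eventuallyEq analyticOnNhd_const hU'c hz hconst
  have hUz : U ⊆ {g z} := fun y hy => by
    obtain ⟨x, hx, hxy⟩ := hsurj y hy
    exact (show g x = y from hxy) ▸ hgz hx
  have hne : (interior {g z}).Nonempty := hUne.mono (interior_maximal hUz hU)
  simp at hne

theorem dense_compl_image_critPts {g : ℂ → ℂ} {U' : Set ℂ} (hU' : IsOpen U')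
    (hg : DifferentiableOn ℂ g U') : Dense (g '' critPts g U')ᶜ := by
  have hderiv : ∀ z ∈ critPts g U', HasFDerivWithinAt g (0 : ℂ →L[ℝ] ℂ) (critPts g U') z := by
    rintro z ⟨hz, hz0⟩
    have h := (hg.differentiableAt (hU'.mem_nhds hz)).hasDerivAt
    rw [hz0] at h
    simpa using h.hasFDerivAt.restrictScalars ℝ |>.hasFDerivWithinAt
  have hnull := MeasureTheory.addHaar_image_eq_zero_of_det_fderivWithin_eq_zero
    MeasureTheory.volume hderiv fun z _ => by
      simp [ContinuousLinearMap.det]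
  exact MeasureTheory.Measure.dense_of_ae (MeasureTheory.measure_eq_zero_iff_ae_notMem.1 hnull)

end Openness

section Division

variable {f g : ℂ → ℂ} {U' : Set ℂ} {w : ℂ}

theorem exists_eq_prod_sub_mul (hU' : IsOpen U') (hf : DifferentiableOn ℂ f U') (s : Finset ℂ)
    (hs : ∀ x ∈ s, x ∈ U' ∧ f x = 0) :
    ∃ e : ℂ → ℂ, DifferentiableOn ℂ e U' ∧ ∀ z, f z = (∏ x ∈ s, (z - x)) * e z := by
  classical
  induction s using Finset.induction_on with
  | empty => exact ⟨f, hf, by simp⟩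
  | insert a s ha ih =>
    obtain ⟨e, he, hfe⟩ := ih fun x hx => hs x (Finset.mem_insert_of_mem hx)
    obtain ⟨haU, hfa⟩ := hs a (Finset.mem_insert_self a s)
    have hprod : ∏ x ∈ s, (a - x) ≠ 0 :=
      Finset.prod_ne_zero_iff.2 fun x hx h => ha (sub_eq_zero.1 h ▸ hx)
    have hea : e a = 0 := (mul_eq_zero.1 ((hfe a).symm.trans hfa)).resolve_left hprod
    refine ⟨dslope e a, (Complex.differentiableOn_dslope (hU'.mem_nhds haU)).2 he, fun z => ?_⟩
    have hslope : (z - a) * dslope e a z = e z := by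
      simpa [hea] using sub_smul_dslope e a z
    rw [Finset.prod_insert ha, hfe z, ← hslope]
    ring

theorem exists_sub_eq_prod_mul_of_notMem_image_critPts (hU' : IsOpen U')
    (hg : DifferentiableOn ℂ g U') (hw : w ∉ g '' critPts g U') {s : Finset ℂ}
    (hs : ∀ x, x ∈ s ↔ x ∈ U' ∧ g x = w) :
    ∃ e : ℂ → ℂ, DifferentiableOn ℂ e U' ∧ (∀ z ∈ U', e z ≠ 0) ∧
      ∀ z, g z - w = (∏ x ∈ s, (z - x)) * e z := by
  obtain ⟨e, he, hge⟩ := exists_eq_prod_sub_mul hU' (hg.sub_const w) s fun x hx =>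
    ⟨((hs x).1 hx).1, sub_eq_zero.2 ((hs x).1 hx).2⟩
  refine ⟨e, he, fun z hz hez => hw ?_, hge⟩
  have hgz : g z = w := sub_eq_zero.1 (by rw [hge z, hez, mul_zero])
  have hp : HasDerivAt (fun y => ∏ x ∈ s, (y - x)) (deriv (fun y => ∏ x ∈ s, (y - x)) z) z :=
    DifferentiableAt.hasDerivAt (by fun_prop)
  have hmul := hp.mul (he.differentiableAt (hU'.mem_nhds hz)).hasDerivAt
  rw [hez, Finset.prod_eq_zero ((hs z).2 ⟨hz, hgz⟩) (sub_self z), mul_zero, zero_mul,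
    add_zero] at hmul
  have hzero : HasDerivAt (fun y => g y - w) 0 z :=
    hmul.congr_of_eventuallyEq (Eventually.of_forall hge)
  exact ⟨z, ⟨hz, by simpa using hzero.deriv⟩, hgz⟩

end Division

section FiberModel

variable {ι κ : Type*} [Fintype ι] [Fintype κ] {f g : ℂ → ℂ} {T T' U U' : Set ℂ} {w : ℂ} {C : ℝ}
  {X : ι → ℂ}

/-- `X` is a model of the fibre of `g` over `w` on `T`: up to the factor `C`, the map `g - w`
has on `T` the size of the monic polynomial with roots `X i`. So `X` enumerates the points of `T`
over `w` with multiplicities, also when `w` is a critical value, and it does so stably in `w`. -/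
def IsFiberModel (g : ℂ → ℂ) (w : ℂ) (T : Set ℂ) (C : ℝ) (X : ι → ℂ) : Prop :=
  ∀ z ∈ T, ‖g z - w‖ ≤ C * ∏ i, ‖z - X i‖ ∧ ∏ i, ‖z - X i‖ ≤ C * ‖g z - w‖

namespace IsFiberModel

theorem mono (hX : IsFiberModel g w T C X) (hT : T' ⊆ T) : IsFiberModel g w T' C X :=
  fun z hz => hX z (hT hz)

theorem apply_eq (hX : IsFiberModel g w T C X) {i : ι} (hi : X i ∈ T) : g (X i) = w := by
  have hle := (hX _ hi).1
  rw [Finset.prod_eq_zero (Finset.mem_univ i) (by simp), mul_zero] at hle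
  exact sub_eq_zero.1 (norm_le_zero_iff.1 hle)

theorem exists_eq (hX : IsFiberModel g w T C X) {z : ℂ} (hz : z ∈ T) (hgz : g z = w) :
    ∃ i, X i = z := by
  have hle := (hX z hz).2
  rw [hgz, sub_self, norm_zero, mul_zero] at hle
  obtain ⟨i, -, hi⟩ := Finset.prod_eq_zero_iff.1
    (hle.antisymm (Finset.prod_nonneg fun _ _ => norm_nonneg _))
  exact ⟨i, (sub_eq_zero.1 (norm_eq_zero.1 hi)).symm⟩

theorem comp {Y : ι → κ → ℂ} (hC : 0 ≤ C) (hX : IsFiberModel f w T C X)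
    (hY : ∀ i, IsFiberModel g (X i) T' C (Y i)) (hg : MapsTo g T' T) :
    IsFiberModel (f ∘ g) w T' (C ^ (Fintype.card ι + 1)) fun p : ι × κ => Y p.1 p.2 := by
  intro z hz
  have hprod (u : ι → ℝ) : ∏ i, (C * u i) = C ^ Fintype.card ι * ∏ i, u i := by
    rw [Finset.prod_mul_distrib, Finset.prod_const, Finset.card_univ]
  rw [Fintype.prod_prod_type]
  constructor
  · calc ‖f (g z) - w‖ ≤ C * ∏ i, ‖g z - X i‖ := (hX _ (hg hz)).1
      _ ≤ C * ∏ i, (C * ∏ j, ‖z - Y i j‖) := by gcongr with i; exact (hY i z hz).1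
      _ = C ^ (Fintype.card ι + 1) * ∏ i, ∏ j, ‖z - Y i j‖ := by rw [hprod]; ring
  · calc ∏ i, ∏ j, ‖z - Y i j‖ ≤ ∏ i, (C * ‖g z - X i‖) := by gcongr with i; exact (hY i z hz).2
      _ = C ^ Fintype.card ι * ∏ i, ‖g z - X i‖ := hprod _
      _ ≤ C ^ Fintype.card ι * (C * ‖f (g z) - w‖) := by gcongr; exact (hX _ (hg hz)).2
      _ = C ^ (Fintype.card ι + 1) * ‖f (g z) - w‖ := by ring

theorem isClosed_setOf (g : ℂ → ℂ) (T : Set ℂ) (C : ℝ) :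
    IsClosed {p : ℂ × (ι → ℂ) | IsFiberModel g p.1 T C p.2} := by
  simp only [IsFiberModel, Set.ofPred_forall, Set.ofPred_and]
  exact isClosed_biInter fun z _ => (isClosed_le (by fun_prop) (by fun_prop)).inter
    (isClosed_le (by fun_prop) (by fun_prop))

theorem exists_of_mem_closure {E : Set ℂ} (hE : IsCompact E) {W : Set ℂ}
    (hW : ∀ u ∈ W, ∃ X : ι → ℂ, (∀ i, X i ∈ E) ∧ IsFiberModel g u T C X) (hw : w ∈ closure W) :
    ∃ X : ι → ℂ, (∀ i, X i ∈ E) ∧ IsFiberModel g w T C X := by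
  have hEc : IsCompact (univ.pi fun _ : ι => E) := isCompact_univ_pi fun _ => hE
  have : CompactSpace (univ.pi fun _ : ι => E) := isCompact_iff_compactSpace.1 hEc
  have hcl := isClosedMap_fst_of_compactSpace (X := ℂ) (Y := univ.pi fun _ : ι => E) _
    ((isClosed_setOf g T C).preimage (continuous_id.prodMap continuous_subtype_val))
  obtain ⟨⟨u, X, hXE⟩, hX, rfl⟩ := closure_minimal (fun u hu => by
    obtain ⟨X, hXE, hX⟩ := hW u hu
    exact ⟨(u, ⟨X, fun i _ => hXE i⟩), hX, rfl⟩) hcl hw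
  exact ⟨X, fun i => hXE i (mem_univ i), hX⟩

theorem exists_of_isCompact {E F W : Set ℂ} (hE : IsCompact E) (hF : IsCompact F)
    (hW : IsCompact W) (hg : ContinuousOn g F) (hEF : Disjoint E F) (hgW : ∀ z ∈ F, g z ∉ W) :
    ∃ C, 1 ≤ C ∧ ∀ w ∈ W, ∀ X : ι → ℂ, (∀ i, X i ∈ E) → IsFiberModel g w F C X := by
  set S : Set (ℂ × ℂ × (ι → ℂ)) := F ×ˢ W ×ˢ univ.pi fun _ => E
  have hS : IsCompact S := hF.prod (hW.prod (isCompact_univ_pi fun _ => hE))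
  set u : ℂ × ℂ × (ι → ℂ) → ℝ := fun p => ‖g p.1 - p.2.1‖
  set v : ℂ × ℂ × (ι → ℂ) → ℝ := fun p => ∏ i, ‖p.1 - p.2.2 i‖
  have hu : ContinuousOn u S :=
    ((hg.comp continuousOn_fst fun p hp => hp.1).sub (by fun_prop)).norm
  have hv : ContinuousOn v S := by fun_prop
  have hu0 : ∀ p ∈ S, 0 < u p := fun p hp =>
    norm_pos_iff.2 (sub_ne_zero.2 fun h => hgW _ hp.1 (h ▸ hp.2.1))
  have hv0 : ∀ p ∈ S, 0 < v p := fun p hp => Finset.prod_pos fun i _ =>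
    norm_pos_iff.2 (sub_ne_zero.2 fun h => hEF.ne_of_mem (hp.2.2 i (mem_univ i)) hp.1 h.symm)
  obtain ⟨A, hA⟩ := hS.bddAbove_image (hu.div hv fun p hp => (hv0 p hp).ne')
  obtain ⟨B, hB⟩ := hS.bddAbove_image (hv.div hu fun p hp => (hu0 p hp).ne')
  refine ⟨max 1 (max A B), le_max_left _ _, fun w hw X hX z hz => ?_⟩
  have hp : (z, w, X) ∈ S := ⟨hz, hw, fun i _ => hX i⟩
  constructor
  · refine (div_le_iff₀ (hv0 _ hp)).1 ((hA (mem_image_of_mem _ hp)).trans ?_)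
    exact (le_max_left _ _).trans (le_max_right _ _)
  · refine (div_le_iff₀ (hu0 _ hp)).1 ((hB (mem_image_of_mem _ hp)).trans ?_)
    exact (le_max_right _ _).trans (le_max_right _ _)

-- The maximum principle applies to `e` and `e⁻¹`.
theorem of_frontier {e : ℂ → ℂ} (hT : Bornology.IsBounded T) (he : DiffContOnCl ℂ e T)
    (he0 : ∀ z ∈ closure T, e z ≠ 0) (hge : ∀ z ∈ closure T, g z - w = (∏ i, (z - X i)) * e z)
    (hXT : ∀ i, X i ∉ frontier T) (hX : IsFiberModel g w (frontier T) C X) :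
    IsFiberModel g w T C X := by
  have hnorm : ∀ z ∈ closure T, ‖g z - w‖ = (∏ i, ‖z - X i‖) * ‖e z‖ := fun z hz => by
    rw [hge z hz, norm_mul, norm_prod]
  have hfr : ∀ z ∈ frontier T, ‖e z‖ ≤ C ∧ ‖(e z)⁻¹‖ ≤ C := fun z hz => by
    have hz' := frontier_subset_closure hz
    have hprod : 0 < ∏ i, ‖z - X i‖ := Finset.prod_pos fun i _ =>
      norm_pos_iff.2 (sub_ne_zero.2 fun h => hXT i (h ▸ hz))
    have hez : 0 < ‖e z‖ := norm_pos_iff.2 (he0 z hz')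
    obtain ⟨hle, hge⟩ := hX z hz
    rw [hnorm z hz'] at hle hge
    refine ⟨le_of_mul_le_mul_left (by linarith) hprod, ?_⟩
    rw [norm_inv, inv_le_iff_one_le_mul₀ hez]
    exact le_of_mul_le_mul_left (by linarith) hprod
  intro z hz
  have hz' := subset_closure hz
  have hle : ‖e z‖ ≤ C :=
    Complex.norm_le_of_forall_mem_frontier_norm_le hT he (fun y hy => (hfr y hy).1) hz'
  have hinv : ‖(e z)⁻¹‖ ≤ C := Complex.norm_le_of_forall_mem_frontier_norm_le hT (he.inv he0)
    (fun y hy => (hfr y hy).2) hz'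
  have hprod : 0 ≤ ∏ i, ‖z - X i‖ := Finset.prod_nonneg fun _ _ => norm_nonneg _
  rw [norm_inv, inv_le_iff_one_le_mul₀ (norm_pos_iff.2 (he0 z hz'))] at hinv
  rw [hnorm z hz']
  constructor <;> nlinarith

end IsFiberModel

end FiberModel

section FiberModelExistence

variable {g : ℂ → ℂ} {U U' K : Set ℂ} {d : ℕ}

theorem exists_isFiberModel_of_mem_closure (hU' : IsOpen U') (hg : DifferentiableOn ℂ g U')
    (hdeg : HasDeg g U' U d) (hd : d ≠ 0) {E T W : Set ℂ} (hE : IsCompact E) (hW : IsCompact W)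
    (hWU : W ⊆ U) (hT : IsOpen T) (hTb : Bornology.IsBounded T) (hTU : closure T ⊆ U')
    (hET : E ⊆ T) (hWE : U' ∩ g ⁻¹' W ⊆ E) :
    ∃ C, 1 ≤ C ∧ ∀ w ∈ closure (W \ g '' critPts g U'), ∃ X : Fin d → ℂ, (∀ i, X i ∈ E) ∧
      IsFiberModel g w T C X := by
  have hfrT : Disjoint T (frontier T) := (disjoint_frontier_iff_isOpen.2 hT).symm
  have hfrU : frontier T ⊆ U' := frontier_subset_closure.trans hTU
  obtain ⟨C, hC, hfr⟩ := IsFiberModel.exists_of_isCompact (ι := Fin d) hE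
    (hTb.isCompact_closure.of_isClosed_subset isClosed_frontier frontier_subset_closure) hW
    (hg.continuousOn.mono hfrU) (hfrT.mono_left hET)
    fun z hz hgz => hfrT.ne_of_mem (hET (hWE ⟨hfrU hz, hgz⟩)) hz rfl
  refine ⟨C, hC, fun w => IsFiberModel.exists_of_mem_closure hE ?_⟩
  rintro u ⟨huW, hu⟩
  have hcard := hdeg.2 u (hWU huW) hu
  have hfin : (U' ∩ g ⁻¹' {u}).Finite := finite_of_ncard_ne_zero (hcard ▸ hd)
  obtain ⟨e, he, he0, hge⟩ := exists_sub_eq_prod_mul_of_notMem_image_critPts hU' hg hu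
    (s := hfin.toFinset) fun x => hfin.mem_toFinset
  let φ := hfin.toFinset.equivFinOfCardEq ((ncard_eq_toFinset_card _ hfin).symm.trans hcard)
  have hφ (i) : (φ.symm i : ℂ) ∈ E := by
    obtain ⟨hU, hgx⟩ := hfin.mem_toFinset.1 (φ.symm i).2
    exact hWE ⟨hU, mem_preimage.2 ((show g _ = u from hgx).symm ▸ huW)⟩
  refine ⟨fun i => φ.symm i, hφ, IsFiberModel.of_frontier hTb (he.mono hTU).diffContOnCl
    (fun z hz => he0 z (hTU hz)) (fun z _ => ?_) (fun i hi => hfrT.ne_of_mem (hET (hφ i)) hi rfl)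
    (hfr u huW _ hφ)⟩
  rw [hge z, Equiv.prod_comp φ.symm fun x : hfin.toFinset => z - (x : ℂ),
    Finset.prod_coe_sort _ fun x => z - x]

theorem ProperOn.exists_preimage_cthickening_subset (hprop : ProperOn g U' U) (hU : IsOpen U)
    (hg : ContinuousOn g U') (hK : IsCompact K) (hKU : K ⊆ U) {O : Set ℂ} (hO : IsOpen O)
    (hKO : U' ∩ g ⁻¹' K ⊆ O) :
    ∃ η, 0 < η ∧ cthickening η K ⊆ U ∧ U' ∩ g ⁻¹' cthickening η K ⊆ O := by
  have hcl : closure (U' \ O) ∩ U' ⊆ U' \ O := fun z hz =>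
    ⟨hz.2, hO.isClosed_compl.closure_subset_iff.2 (fun _ h => h.2) hz.1⟩
  have himage := hprop.closure_image_inter_subset hU hg sdiff_subset hcl
  obtain ⟨η, hη, hsub⟩ := hK.exists_cthickening_subset_open
    (hU.inter isClosed_closure.isOpen_compl) fun y hy => ⟨hKU hy, fun hy' => by
      obtain ⟨x, hx, rfl⟩ := himage ⟨hy', hKU hy⟩
      exact hx.2 (hKO ⟨hx.1, hy⟩)⟩
  refine ⟨η, hη, fun y hy => (hsub hy).1, fun z hz => by_contra fun hzO => ?_⟩
  exact (hsub hz.2).2 (subset_closure (mem_image_of_mem g ⟨hz.1, hzO⟩))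

theorem exists_isFiberModel (H : PLSetting g U' U d) (hK : IsCompact K)
    (hKinv : U' ∩ g ⁻¹' K = K) :
    ∃ C ρ, 1 ≤ C ∧ 0 < ρ ∧ ∀ w ∈ K, ∃ X : Fin d → ℂ,
      (∀ i, X i ∈ K) ∧ IsFiberModel g w (thickening ρ K) C X := by
  have hKU' : K ⊆ U' := hKinv ▸ inter_subset_left
  have hKU : K ⊆ U := hKU'.trans H.subset
  obtain ⟨ρ, hρ, hρU⟩ := hK.exists_cthickening_subset_open H.disk'.1 hKU'
  have hhalf : cthickening (ρ / 2) K ⊆ thickening ρ K :=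
    cthickening_subset_thickening' hρ (half_lt_self hρ) K
  have hTU : thickening ρ K ⊆ U' := (thickening_subset_cthickening ρ K).trans hρU
  obtain ⟨η, hη, hηU, hηE⟩ := H.proper.exists_preimage_cthickening_subset H.disk.1
    H.holo.continuousOn hK hKU isOpen_thickening
    (hKinv.subset.trans (self_subset_thickening (half_pos hρ) K))
  obtain ⟨C, hC, hmodel⟩ := exists_isFiberModel_of_mem_closure H.disk'.1 H.holo H.deg
    (by have := H.two_le_d; omega) hK.cthickening hK.cthickening hηU isOpen_thickening
    (hK.isBounded.thickening (δ := ρ)) ((closure_thickening_subset_cthickening ρ K).trans hρU)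
    hhalf (hηE.trans (thickening_subset_cthickening _ K))
  refine ⟨C, ρ, hC, hρ, fun w hw => ?_⟩
  have hwcl : w ∈ closure (cthickening η K \ g '' critPts g U') :=
    closure_mono (inter_subset_inter_left _ (thickening_subset_cthickening η K))
      ((dense_compl_image_critPts H.disk'.1 H.holo).open_subset_closure_inter isOpen_thickening
        (self_subset_thickening hη K hw))
  obtain ⟨X, hXE, hX⟩ := hmodel w hwcl
  refine ⟨X, fun i => hKinv ▸ ⟨hTU (hhalf (hXE i)), ?_⟩, hX⟩
  exact mem_preimage.2 ((hX.apply_eq (hhalf (hXE i))).symm ▸ hw)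

end FiberModelExistence

section CriticalPoints

theorem injective_of_isCoveringMap {E X : Type*} [TopologicalSpace E] [TopologicalSpace X]
    [PreconnectedSpace E] [SimplyConnectedSpace X] [LocallyPathConnectedSpace X] {p : E → X}
    (hp : IsCoveringMap p) : Injective p := by
  intro a b hab
  obtain ⟨σ, ⟨hσa, hσ⟩, -⟩ :=
    hp.existsUnique_continuousMap_lifts (ContinuousMap.id X) (p a) a rfl
  have hσp : σ ∘ p = id := hp.eq_of_comp_eq (σ.continuous.comp hp.continuous) continuous_id
    (funext fun x => congrFun hσ (p x)) a hσa
  calc a = σ (p a) := (congrFun hσp a).symm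
    _ = σ (p b) := by rw [hab]
    _ = b := congrFun hσp b

variable {g : ℂ → ℂ} {U U' : Set ℂ}

theorem isLocalHomeomorph_restrict_of_critPts_eq_empty (hU : IsOpen U) (hU' : IsOpen U')
    (hg : DifferentiableOn ℂ g U') (hmaps : MapsTo g U' U) (hcrit : critPts g U' = ∅) :
    IsLocalHomeomorph (hmaps.restrict g U' U) := by
  have hloc : IsLocalHomeomorphOn g U' := by
    refine IsLocalHomeomorphOn.mk _ _ fun z hz => ?_
    have hd : HasStrictDerivAt g (deriv g z) z :=
      (hg.analyticOnNhd hU' z hz).hasStrictDerivAt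
    have hequiv := hd.hasStrictFDerivAt_equiv fun h0 => hcrit.subset ⟨hz, h0⟩
    exact ⟨hequiv.toOpenPartialHomeomorph g, hequiv.mem_toOpenPartialHomeomorph_source,
      fun _ _ => rfl⟩
  refine IsLocalHomeomorph.of_comp (g := ((↑) : U → ℂ)) ?_
    hU.isOpenEmbedding_subtypeVal.isLocalHomeomorph (hg.continuousOn.mapsToRestrict hmaps)
  rw [isLocalHomeomorph_iff_isLocalHomeomorphOn_univ]
  exact hloc.comp hU'.isOpenEmbedding_subtypeVal.isLocalHomeomorph.isLocalHomeomorphOn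
    fun z _ => z.2

theorem ProperOn.isClosedMap_restrict (hprop : ProperOn g U' U) (hU : IsOpen U)
    (hg : ContinuousOn g U') (hmaps : MapsTo g U' U) : IsClosedMap (hmaps.restrict g U' U) := by
  intro A hA
  obtain ⟨F, hF, rfl⟩ := isClosed_induced_iff.1 hA
  have himage := hprop.closure_image_inter_subset hU hg (inter_subset_left (t := F))
    fun z hz => ⟨hz.2, hF.closure_subset_iff.2 inter_subset_right hz.1⟩
  refine isClosed_induced_iff.2 ⟨closure (g '' (U' ∩ F)), isClosed_closure, ?_⟩
  ext y
  constructor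
  · intro hy
    obtain ⟨x, hx, hxy⟩ := himage ⟨hy, y.2⟩
    exact ⟨⟨x, hx.1⟩, hx.2, Subtype.ext hxy⟩
  · rintro ⟨x, hx, rfl⟩
    exact subset_closure (mem_image_of_mem g ⟨x.2, hx⟩)

theorem ProperOn.injOn_of_critPts_eq_empty (hprop : ProperOn g U' U) (hU : IsOpen U)
    (hUs : IsSimplyConnected U) (hU' : IsOpen U') (hU'c : IsPreconnected U')
    (hg : DifferentiableOn ℂ g U') (hmaps : MapsTo g U' U)
    (hfin : ∀ w ∈ U, (U' ∩ g ⁻¹' {w}).Finite) (hcrit : critPts g U' = ∅) : InjOn g U' := by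
  have : SimplyConnectedSpace U := hUs
  have : LocallyPathConnectedSpace U := hU.locallyPathConnectedSpace
  have : PreconnectedSpace U' := Subtype.preconnectedSpace hU'c
  have hfiber (w : U) : (hmaps.restrict g U' U ⁻¹' {w}).Finite := by
    refine .of_finite_image ((hfin w w.2).subset ?_) Subtype.val_injective.injOn
    rintro _ ⟨x, rfl, rfl⟩
    exact ⟨x.2, rfl⟩
  have hcov : IsCoveringMap (hmaps.restrict g U' U) :=
    isCoveringMap_iff_isCoveringMapOn_univ.2 <|
      (hprop.isClosedMap_restrict hU hg.continuousOn hmaps).isCoveringMapOn_of_isLocalHomeomorphOn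
        (fun w _ => hfiber w)
        ((isLocalHomeomorph_restrict_of_critPts_eq_empty hU hU' hg hmaps
          hcrit).isLocalHomeomorphOn.mono (subset_univ _))
  intro a ha b hb hab
  exact congrArg Subtype.val
    (injective_of_isCoveringMap hcov (a₁ := ⟨a, ha⟩) (a₂ := ⟨b, hb⟩) (Subtype.ext hab))

theorem PLSetting.critPts_nonempty {d : ℕ} (H : PLSetting g U' U d) :
    (critPts g U').Nonempty := by
  by_contra! hcrit
  have hcard : ∀ w ∈ U, (U' ∩ g ⁻¹' {w}).ncard = d := fun w hw => H.deg.2 w hw (by simp [hcrit])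
  have hd := H.two_le_d
  have hfin : ∀ w ∈ U, (U' ∩ g ⁻¹' {w}).Finite := fun w hw =>
    finite_of_ncard_ne_zero (by rw [hcard w hw]; omega)
  have hinj := H.proper.injOn_of_critPts_eq_empty H.disk.1 H.disk.2.2 H.disk'.1
    H.disk'.2.1.isPreconnected H.holo H.mapsTo hfin hcrit
  obtain ⟨w, hw⟩ := H.disk.2.1.nonempty
  have hle : (U' ∩ g ⁻¹' {w}).ncard ≤ 1 := by
    rw [ncard_le_one (hfin w hw)]
    rintro a ⟨ha, hga⟩ b ⟨hb, hgb⟩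
    exact hinj ha hb (Eq.trans hga (Eq.symm hgb))
  rw [hcard w hw] at hle
  omega

end CriticalPoints

section TotalRamification

variable {f g : ℂ → ℂ} {T U U' K : Set ℂ} {w y : ℂ} {C : ℝ}

theorem exists_eq_sub_pow_mul (hU' : IsOpen U') (hf : DifferentiableOn ℂ f U') (hy : y ∈ U')
    (hfy : ¬ ∀ᶠ z in 𝓝 y, f z = 0) (hf0 : ∀ z ∈ U', z ≠ y → f z ≠ 0) :
    ∃ (n : ℕ) (q : ℂ → ℂ), DifferentiableOn ℂ q U' ∧ (∀ z ∈ U', q z ≠ 0) ∧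
      ∀ z ∈ U', f z = (z - y) ^ n * q z := by
  obtain ⟨q₀, hq₀, hq₀y, hfq₀⟩ := (hf.analyticOnNhd hU' y hy).analyticOrderAt_ne_top.1
    (mt analyticOrderAt_eq_top.1 hfy)
  set n := analyticOrderNatAt f y
  replace hfq₀ : ∀ᶠ z in 𝓝 y, f z = (z - y) ^ n * q₀ z := hfq₀
  set q : ℂ → ℂ := update (fun z => f z / (z - y) ^ n) y (q₀ y)
  have hq_ne : ∀ z, z ≠ y → q z = f z / (z - y) ^ n := fun z hz => update_of_ne hz _ _
  have hq_y : q y = q₀ y := update_self _ _ _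
  have hpow : ∀ z, z ≠ y → (z - y) ^ n ≠ 0 := fun z hz => pow_ne_zero _ (sub_ne_zero.2 hz)
  have hqq₀ : q =ᶠ[𝓝 y] q₀ := hfq₀.mono fun z hz => by
    rcases eq_or_ne z y with rfl | hzy
    · exact hq_y
    · rw [hq_ne z hzy, hz, mul_div_cancel_left₀ _ (hpow z hzy)]
  refine ⟨n, q, fun z hz => ?_, fun z hz => ?_, fun z _ => ?_⟩
  all_goals rcases eq_or_ne z y with rfl | hzy
  · exact (hq₀.differentiableAt.congr_of_eventuallyEq hqq₀).differentiableWithinAt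
  · have hdiv : DifferentiableAt ℂ (fun z => f z / (z - y) ^ n) z :=
      (hf.differentiableAt (hU'.mem_nhds hz)).div (by fun_prop) (hpow z hzy)
    exact (hdiv.congr_of_eventuallyEq ((isOpen_ne.eventually_mem hzy).mono
      hq_ne)).differentiableWithinAt
  · exact hq_y ▸ hq₀y
  · rw [hq_ne z hzy]
    exact div_ne_zero (hf0 z hz hzy) (hpow z hzy)
  · rw [hfq₀.self_of_nhds, hq_y]
  · rw [hq_ne z hzy, mul_div_cancel₀ _ (hpow z hzy)]

theorem le_of_norm_pow_mul_le {n d : ℕ} {q : ℂ → ℂ} (hq : ContinuousAt q y) (hqy : q y ≠ 0)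
    (hle : ∀ᶠ z in 𝓝 y, ‖(z - y) ^ n * q z‖ ≤ C * ‖z - y‖ ^ d) : d ≤ n := by
  by_contra! hnd
  have hle' : ∀ᶠ z in 𝓝[≠] y, ‖q z‖ ≤ C * ‖z - y‖ ^ (d - n) := by
    filter_upwards [nhdsWithin_le_nhds hle, self_mem_nhdsWithin] with z hz hzy
    have hpos : 0 < ‖z - y‖ ^ n := pow_pos (norm_pos_iff.2 (sub_ne_zero.2 hzy)) n
    rw [norm_mul, norm_pow, ← Nat.add_sub_cancel' hnd.le, pow_add] at hz
    refine le_of_mul_le_mul_left (hz.trans_eq ?_) hpos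
    ring
  have hlim : Tendsto (fun z => C * ‖z - y‖ ^ (d - n)) (𝓝 y) (𝓝 0) := by
    have hcont : Continuous fun z => C * ‖z - y‖ ^ (d - n) := by fun_prop
    simpa [(Nat.sub_pos_of_lt hnd).ne'] using hcont.tendsto y
  exact hqy (norm_le_zero_iff.1 (le_of_tendsto_of_tendsto
    (hq.norm.tendsto.mono_left nhdsWithin_le_nhds) (hlim.mono_left nhdsWithin_le_nhds) hle'))

theorem IsFiberModel.deriv_ne_zero {ι : Type*} [Fintype ι] {X : ι → ℂ}
    (hX : IsFiberModel g w T C X) (hinj : Injective X) {i : ι} (hT : T ∈ 𝓝 (X i))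
    (hg : DifferentiableAt ℂ g (X i)) : deriv g (X i) ≠ 0 := by
  classical
  intro h0
  have hslope : Tendsto (slope g (X i)) (𝓝[≠] (X i)) (𝓝 0) :=
    h0 ▸ hasDerivAt_iff_tendsto_slope.1 hg.hasDerivAt
  have hle : ∀ᶠ z in 𝓝[≠] (X i),
      ∏ j ∈ Finset.univ.erase i, ‖z - X j‖ ≤ C * ‖slope g (X i) z‖ := by
    filter_upwards [mem_nhdsWithin_of_mem_nhds hT, self_mem_nhdsWithin] with z hzT hz
    have hpos : 0 < ‖z - X i‖ := norm_pos_iff.2 (sub_ne_zero.2 hz)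
    have hzX := (hX z hzT).2
    rw [← Finset.mul_prod_erase _ _ (Finset.mem_univ i)] at hzX
    rw [slope_def_field, hX.apply_eq (mem_of_mem_nhds hT), norm_div, ← mul_div_assoc,
      le_div_iff₀ hpos, mul_comm]
    exact hzX
  have hprod : Continuous fun z => ∏ j ∈ Finset.univ.erase i, ‖z - X j‖ := by fun_prop
  have hzero := le_of_tendsto_of_tendsto ((hprod.tendsto (X i)).mono_left nhdsWithin_le_nhds)
    (hslope.norm.const_mul C) hle
  rw [norm_zero, mul_zero] at hzero
  refine hzero.not_gt (Finset.prod_pos fun j hj => norm_pos_iff.2 (sub_ne_zero.2 fun h => ?_))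
  exact Finset.ne_of_mem_erase hj (hinj h).symm

theorem properOn_of_pow_eq_sub {n : ℕ} {F : ℂ → ℂ} (hprop : ProperOn g U' U)
    (hF : ContinuousOn F U') (hFg : ∀ z ∈ U', F z ^ n = g z - w) :
    ProperOn F U' {ζ | ζ ^ n + w ∈ U} := by
  intro Q hQ hQc
  have himage : (fun ζ => ζ ^ n + w) '' Q ⊆ U := image_subset_iff.2 hQ
  have hc := hprop _ himage (hQc.image (by fun_prop))
  have heq : U' ∩ F ⁻¹' Q = U' ∩ g ⁻¹' ((fun ζ => ζ ^ n + w) '' Q) ∩ F ⁻¹' Q := by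
    ext z
    refine ⟨fun hz => ⟨⟨hz.1, F z, hz.2, ?_⟩, hz.2⟩, fun hz => ⟨hz.1.1, hz.2⟩⟩
    simp [hFg z hz.1]
  rw [heq]
  exact hc.of_isClosed_subset ((hF.mono inter_subset_left).preimage_isClosed_of_isClosed
    hc.isClosed hQc.isClosed) inter_subset_left

theorem properOn_pow_add {n : ℕ} (hn : n ≠ 0) :
    ProperOn (fun ζ : ℂ => ζ ^ n + w) {ζ | ζ ^ n + w ∈ U} U := by
  intro Q hQ hQc
  have hpre : {ζ : ℂ | ζ ^ n + w ∈ U} ∩ (fun ζ : ℂ => ζ ^ n + w) ⁻¹' Q =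
      (fun ζ : ℂ => ζ ^ n + w) ⁻¹' Q := inter_eq_right.2 fun _ hζ => hQ hζ
  rw [hpre]
  obtain ⟨M, hM⟩ := hQc.isBounded.exists_norm_le
  have hbdd : Bornology.IsBounded ((fun ζ : ℂ => ζ ^ n + w) ⁻¹' Q) := by
    refine isBounded_iff_forall_norm_le.2 ⟨max 1 (M + ‖w‖), fun ζ hζ => ?_⟩
    rcases le_total ‖ζ‖ 1 with hζ1 | hζ1
    · exact le_max_of_le_left hζ1
    · refine le_max_of_le_right ?_
      calc ‖ζ‖ ≤ ‖ζ‖ ^ n := le_self_pow₀ hζ1 hn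
        _ = ‖(ζ ^ n + w) - w‖ := by rw [add_sub_cancel_right, norm_pow]
        _ ≤ M + ‖w‖ := (norm_sub_le _ _).trans (by gcongr; exact hM _ hζ)
  exact isCompact_of_isClosed_isBounded (hQc.isClosed.preimage (by fun_prop)) hbdd

theorem not_eventually_eq_of_nhds_le_map {z : ℂ} (hopen : 𝓝 (g z) ≤ map g (𝓝 z)) :
    ¬ ∀ᶠ x in 𝓝 z, g x = g z := fun hconst =>
  have hmem : {g z} ∈ 𝓝 (g z) := hopen hconst
  not_isOpen_singleton (g z) ((isOpen_singleton_iff_nhds_eq_pure (g z)).2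
    (le_antisymm (le_pure_iff.2 hmem) (pure_le_nhds _)))

theorem isOpen_image_of_pow_eq_sub {n : ℕ} {F : ℂ → ℂ} (hU' : IsOpen U')
    (hF : DifferentiableOn ℂ F U') (hopen : ∀ z ∈ U', 𝓝 (g z) ≤ map g (𝓝 z))
    (hFg : ∀ z ∈ U', F z ^ n = g z - w) : IsOpen (F '' U') := by
  rw [isOpen_iff_mem_nhds]
  rintro _ ⟨z, hz, rfl⟩
  rcases (hF.analyticOnNhd hU' z hz).eventually_constant_or_nhds_le_map_nhds with hconst | hle
  · refine absurd ?_ (not_eventually_eq_of_nhds_le_map (hopen z hz))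
    filter_upwards [hconst, hU'.mem_nhds hz] with x hx hxU
    exact sub_left_injective ((hFg x hxU).symm.trans (hx ▸ hFg z hz))
  · exact hle (image_mem_map (hU'.mem_nhds hz))

-- `ζ ↦ ζ ^ n + w` maps the complement of the range of `F` onto an open and closed subset of `U`,
-- which misses `w` because the only `n`-th root of `0` is `F y`.
theorem surjOn_of_pow_eq_sub {n : ℕ} {F : ℂ → ℂ} (hn : n ≠ 0) (hprop : ProperOn g U' U)
    (hmaps : MapsTo g U' U) (hU : IsOpen U) (hUc : IsPreconnected U) (hU' : IsOpen U')
    (hF : DifferentiableOn ℂ F U') (hopen : ∀ z ∈ U', 𝓝 (g z) ≤ map g (𝓝 z))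
    (hFg : ∀ z ∈ U', F z ^ n = g z - w) (hy : y ∈ U') (hgy : g y = w) :
    SurjOn F U' {ζ | ζ ^ n + w ∈ U} := by
  set V : Set ℂ := {ζ | ζ ^ n + w ∈ U}
  have hp : Continuous fun ζ : ℂ => ζ ^ n + w := by fun_prop
  have hV : IsOpen V := hU.preimage hp
  have hFimage : closure (F '' U') ∩ V ⊆ F '' U' :=
    (properOn_of_pow_eq_sub hprop hF.continuousOn hFg).closure_image_inter_subset hV
      hF.continuousOn subset_rfl inter_subset_right
  set B : Set ℂ := V \ F '' U'
  have hB : IsOpen B := by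
    have : B = V ∩ (closure (F '' U'))ᶜ :=
      Subset.antisymm (fun ζ hζ => ⟨hζ.1, fun h => hζ.2 (hFimage ⟨h, hζ.1⟩)⟩)
        fun ζ hζ => ⟨hζ.1, fun h => hζ.2 (subset_closure h)⟩
    exact this ▸ hV.inter isClosed_closure.isOpen_compl
  have hBclosed : closure B ∩ V ⊆ B := fun ζ hζ => ⟨hζ.2, fun hζF =>
    have hdisj : Disjoint (closure B) (F '' U') := disjoint_sdiff_left.closure_left
      (isOpen_image_of_pow_eq_sub hU' hF hopen hFg)
    disjoint_left.1 hdisj hζ.1 hζF⟩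
  have hpB : IsOpen ((fun ζ : ℂ => ζ ^ n + w) '' B) := by
    rw [← image_image (· + w) (· ^ n)]
    have : NeZero n := ⟨hn⟩
    exact (Homeomorph.addRight w).isOpenMap _ ((Complex.isOpenQuotientMap_pow n).isOpenMap _ hB)
  have hpBclosed : closure ((fun ζ : ℂ => ζ ^ n + w) '' B) ∩ U ⊆ (fun ζ : ℂ => ζ ^ n + w) '' B :=
    (properOn_pow_add hn).closure_image_inter_subset hU hp.continuousOn sdiff_subset hBclosed
  by_contra hsurj
  obtain ⟨ζ, hζV, hζF⟩ := not_subset.1 hsurj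
  obtain ⟨η, hηB, hη⟩ := hUc.subset_of_closure_inter_subset hpB ⟨_, hζV, ζ, ⟨hζV, hζF⟩, rfl⟩
    hpBclosed (hgy ▸ hmaps hy)
  have hη0 : η = F y := by
    rw [pow_eq_zero_iff hn |>.1 (add_eq_right.1 hη),
      pow_eq_zero_iff hn |>.1 ((hFg y hy).trans (sub_eq_zero.2 hgy))]
  exact hηB.2 ⟨y, hy, hη0.symm⟩

theorem exists_injective_pow_eq {n : ℕ} (hn : n ≠ 0) {a : ℂ} (ha : a ≠ 0) :
    ∃ Z : Fin n → ℂ, Injective Z ∧ ∀ k, Z k ^ n = a := by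
  obtain ⟨ζ, hζ⟩ := IsAlgClosed.exists_pow_nat_eq a (Nat.pos_of_ne_zero hn)
  have hζ0 : ζ ≠ 0 := fun h => ha (by rw [← hζ, h, zero_pow hn])
  have hξ := Complex.isPrimitiveRoot_exp n hn
  refine ⟨fun k => Complex.exp (2 * Real.pi * Complex.I / n) ^ (k : ℕ) * ζ, fun k l hkl => ?_,
    fun k => ?_⟩
  · exact Fin.ext (hξ.pow_inj k.2 l.2 (mul_right_cancel₀ hζ0 hkl))
  · rw [mul_pow, ← pow_mul, mul_comm (k : ℕ), pow_mul, hξ.pow_eq_one, one_pow, one_mul, hζ]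

theorem exists_pow_eq_sub_of_fiber_eq_singleton {d : ℕ} (hU's : IsSimplyConnected U')
    (hU' : IsOpen U') (hg : DifferentiableOn ℂ g U') (hfib : U' ∩ g ⁻¹' {w} = {y})
    (hopen : 𝓝 (g y) ≤ map g (𝓝 y)) (hd : d ≠ 0)
    (hle : ∀ᶠ z in 𝓝 y, ‖g z - w‖ ≤ C * ‖z - y‖ ^ d) :
    ∃ n F, d ≤ n ∧ DifferentiableOn ℂ F U' ∧ ∀ z ∈ U', F z ^ n = g z - w := by
  obtain ⟨hy, hgy⟩ : y ∈ U' ∩ g ⁻¹' {w} := hfib ▸ mem_singleton y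
  obtain ⟨n, q, hqd, hq0, hq⟩ := exists_eq_sub_pow_mul (f := fun z => g z - w) hU' (hg.sub_const w)
    hy (fun h => not_eventually_eq_of_nhds_le_map hopen
      (h.mono fun z hz => (sub_eq_zero.1 hz).trans hgy.symm))
    fun z hz hzy h => hzy (hfib.subset ⟨hz, sub_eq_zero.1 h⟩)
  have hdn : d ≤ n := by
    refine le_of_norm_pow_mul_le (hqd.differentiableAt (hU'.mem_nhds hy)).continuousAt (hq0 y hy)
      (C := C) ?_
    filter_upwards [hle, hU'.mem_nhds hy] with z hz hzU
    exact hq z hzU ▸ hz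
  have hn : n ≠ 0 := fun h => hd (Nat.le_zero.1 (h ▸ hdn))
  obtain ⟨r, hrd, hr⟩ := exists_differentiableOn_pow_eq hU's hU' hqd hq0 hn
  refine ⟨n, fun z => (z - y) * r z, hdn, by fun_prop, fun z hz => ?_⟩
  rw [mul_pow, hr z hz, hq z hz]

theorem IsFiberModel.injective_of_pow_eq_sub {n d : ℕ} {X : Fin d → ℂ} {F : ℂ → ℂ} {u : ℂ}
    (hX : IsFiberModel g u T C X) (hn : n ≠ 0) (hdn : d ≤ n) (hFg : ∀ z ∈ U', F z ^ n = g z - w)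
    (hsurj : SurjOn F U' {ζ | ζ ^ n + w ∈ U}) (hu : u ∈ U) (huw : u ≠ w)
    (hT : U' ∩ g ⁻¹' {u} ⊆ T) : Injective X := by
  obtain ⟨Z, hZinj, hZ⟩ := exists_injective_pow_eq hn (sub_ne_zero.2 huw)
  have hZU (k : Fin n) : Z k ∈ {ζ | ζ ^ n + w ∈ U} := by
    rwa [mem_ofPred_eq, hZ, sub_add_cancel]
  choose Y hYU hY using fun k => hsurj (hZU k)
  have hgY (k : Fin n) : g (Y k) = u := by
    rw [← sub_left_inj, ← hFg _ (hYU k), hY, hZ]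
  choose φ hφ using fun k => hX.exists_eq (hT ⟨hYU k, hgY k⟩) (hgY k)
  have hXφ : Injective (X ∘ φ) := fun k l hkl => hZinj <| by
    have hYkl : Y k = Y l := by simpa only [comp_apply, hφ] using hkl
    rw [← hY, hYkl, hY]
  have hnd : n ≤ d := by simpa using Fintype.card_le_of_injective φ hXφ.of_comp
  obtain rfl := le_antisymm hdn hnd
  have hφsurj := Finite.surjective_of_injective hXφ.of_comp
  intro i j hij
  obtain ⟨k, rfl⟩ := hφsurj i
  obtain ⟨l, rfl⟩ := hφsurj j
  exact congrArg φ (hXφ hij)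

theorem apply_mem_iff_of_inter_preimage_eq (hKinv : U' ∩ g ⁻¹' K = K) {z : ℂ} (hz : z ∈ U') :
    g z ∈ K ↔ z ∈ K :=
  ⟨fun h => hKinv.subset ⟨hz, h⟩, fun h => (hKinv.superset h).2⟩

theorem PLSetting.critPts_subset_singleton {d : ℕ} (H : PLSetting g U' U d) (hK : IsCompact K)
    (hKinv : U' ∩ g ⁻¹' K = K) (hcK : critPts g U' ⊆ K) (hw : w ∈ K)
    (hfib : U' ∩ g ⁻¹' {w} = {y}) : critPts g U' ⊆ {y} := by
  have hd : d ≠ 0 := by have := H.two_le_d; omega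
  have hopen := nhds_le_map_nhds_of_surjective H.disk'.1 H.disk'.2.1.isPreconnected H.disk.1
    H.disk.2.1.nonempty H.holo H.deg.1
  obtain ⟨hy, hgy⟩ : y ∈ U' ∩ g ⁻¹' {w} := hfib ▸ mem_singleton y
  obtain ⟨C, ρ, -, hρ, hmodel⟩ := exists_isFiberModel H hK hKinv
  have hKU' : K ⊆ U' := hKinv ▸ inter_subset_left
  have hKT : ∀ x ∈ K, thickening ρ K ∈ 𝓝 x := fun x hx =>
    isOpen_thickening.mem_nhds (self_subset_thickening hρ K hx)
  have hyK : y ∈ K := (apply_mem_iff_of_inter_preimage_eq hKinv hy).1 (hgy ▸ hw)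
  obtain ⟨X, hXK, hX⟩ := hmodel w hw
  have hXy (i) : X i = y :=
    hfib.subset ⟨hKU' (hXK i), hX.apply_eq (mem_of_mem_nhds (hKT _ (hXK i)))⟩
  obtain ⟨n, F, hdn, hF, hFg⟩ := exists_pow_eq_sub_of_fiber_eq_singleton H.disk'.2.2 H.disk'.1
    H.holo hfib (hopen y hy) hd (mem_of_superset (hKT y hyK) fun z hz => by
      simpa [hXy] using (hX z hz).1)
  have hn : n ≠ 0 := fun h => hd (Nat.le_zero.1 (h ▸ hdn))
  have hsurj := surjOn_of_pow_eq_sub hn H.proper H.mapsTo H.disk.1 H.disk.2.1.isPreconnected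
    H.disk'.1 hF hopen hFg hy hgy
  rintro c ⟨hcU, hc⟩
  by_contra hcy
  have hgcK : g c ∈ K := (apply_mem_iff_of_inter_preimage_eq hKinv hcU).2 (hcK ⟨hcU, hc⟩)
  obtain ⟨Y, hYK, hY⟩ := hmodel (g c) hgcK
  have hfibT : U' ∩ g ⁻¹' {g c} ⊆ thickening ρ K := fun z hz => self_subset_thickening hρ K
    ((apply_mem_iff_of_inter_preimage_eq hKinv hz.1).1 (hz.2 ▸ hgcK))
  have hYinj := hY.injective_of_pow_eq_sub hn hdn hFg hsurj (H.mapsTo hcU)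
    (fun h => hcy (hfib.subset ⟨hcU, h⟩)) hfibT
  obtain ⟨i, rfl⟩ := hY.exists_eq (hfibT ⟨hcU, rfl⟩) rfl
  exact hY.deriv_ne_zero hYinj (hKT _ (hYK i)) (H.holo.differentiableAt (H.disk'.1.mem_nhds hcU)) hc

theorem PLSetting.nontrivial_fiber_comp_self {d : ℕ} (H : PLSetting g U' U d) (hK : IsCompact K)
    (hKinv : U' ∩ g ⁻¹' K = K) (hcK : critPts g U' ⊆ K) (hw : w ∈ K) :
    (K ∩ (g ∘ g) ⁻¹' {w}).Nontrivial := by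
  have hmem {z : ℂ} (hz : z ∈ U') := apply_mem_iff_of_inter_preimage_eq hKinv hz
  have hKU : K ⊆ U := fun z hz => H.subset (hKinv.superset hz).1
  have hlift : ∀ u ∈ K, ∃ x ∈ K, x ∈ U' ∧ g x = u := fun u hu =>
    let ⟨x, hx, hgx⟩ := H.deg.1 u (hKU hu)
    ⟨x, (hmem hx).1 (hgx ▸ hu), hx, hgx⟩
  obtain ⟨y, hyK, hyU, hyw⟩ := hlift w hw
  obtain ⟨x, hxK, hxU, rfl⟩ := hlift y hyK
  by_contra htriv
  have hunique {x' : ℂ} (hx' : x' ∈ K) (hgx' : g (g x') = w) : x' = x :=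
    not_nontrivial_iff.1 htriv ⟨hx', hgx'⟩ ⟨hxK, hyw⟩
  have hfibw : U' ∩ g ⁻¹' {w} = {g x} := by
    refine Subset.antisymm ?_ (singleton_subset_iff.2 ⟨hyU, hyw⟩)
    rintro y' ⟨hy', rfl⟩
    obtain ⟨x', hx', -, rfl⟩ := hlift y' ((hmem hy').1 hw)
    rw [hunique hx' rfl, mem_singleton_iff]
  have hfiby : U' ∩ g ⁻¹' {g x} = {x} := by
    refine Subset.antisymm ?_ (singleton_subset_iff.2 ⟨hxU, rfl⟩)
    rintro x' ⟨hx', hgx' : g x' = g x⟩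
    exact hunique ((hmem hx').1 (hgx' ▸ hyK)) (hgx' ▸ hyw)
  obtain ⟨c, hc⟩ := H.critPts_nonempty
  have hcy : c = g x := H.critPts_subset_singleton hK hKinv hcK hw hfibw hc
  have hcx : c = x := H.critPts_subset_singleton hK hKinv hcK hyK hfiby hc
  have hfix : g c = c := by rw [hcx, ← hcy, hcx]
  have hcrit : critPts g U' = {c} := (singleton_subset_iff.2 hc).antisymm' <|
    hcx ▸ H.critPts_subset_singleton hK hKinv hcK hyK hfiby
  rw [← hcy, ← hcx] at hfiby
  refine H.postCrit_singleton c ?_ hfiby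
  simp [postCrit, hcrit, iterate_fixed hfix]

end TotalRamification

section SecondIterate

variable {g : ℂ → ℂ} {U U' K : Set ℂ} {d : ℕ}

theorem exists_le_dist_of_nontrivial_fiber {ι : Type*} [Fintype ι] [Nonempty ι] {G : ℂ → ℂ}
    {T : Set ℂ} {C : ℝ} (hK : IsCompact K) (hKT : K ⊆ T)
    (hG : ∀ w ∈ K, (K ∩ G ⁻¹' {w}).Nontrivial) :
    ∃ σ, 0 < σ ∧ ∀ w ∈ K, ∀ X : ι → ℂ, (∀ i, X i ∈ K) → IsFiberModel G w T C X →
      ∃ i j, σ ≤ dist (X i) (X j) := by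
  set S : Set (ℂ × (ι → ℂ)) :=
    (K ×ˢ univ.pi fun _ => K) ∩ {p | IsFiberModel G p.1 T C p.2}
  have hS : IsCompact S :=
    (hK.prod (isCompact_univ_pi fun _ => hK)).inter_right (IsFiberModel.isClosed_setOf G T C)
  obtain ⟨j⟩ := ‹Nonempty ι›
  have hpos : ∀ p ∈ S, 0 < dist p.2 fun _ => p.2 j := by
    rintro ⟨w, X⟩ ⟨⟨hw, -⟩, hX⟩
    obtain ⟨x, hx, y, hy, hxy⟩ := hG w hw
    obtain ⟨a, rfl⟩ := hX.exists_eq (hKT hx.1) hx.2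
    obtain ⟨b, rfl⟩ := hX.exists_eq (hKT hy.1) hy.2
    refine dist_pos.2 fun hconst => hxy ?_
    exact (congrFun hconst a).trans (congrFun hconst b).symm
  obtain ⟨σ, hσ, hle⟩ := hS.exists_forall_le' (Continuous.continuousOn (by fun_prop)) hpos
  refine ⟨σ, hσ, fun w hw X hXK hX => ?_⟩
  by_contra! hlt
  exact (hle (w, X) ⟨⟨hw, fun i _ => hXK i⟩, hX⟩).not_gt
    ((dist_pi_lt_iff hσ).2 fun i => hlt i j)

theorem exists_isFiberModel_comp_self (H : PLSetting g U' U d) (hK : IsCompact K)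
    (hKinv : U' ∩ g ⁻¹' K = K) :
    ∃ C ρ, 1 ≤ C ∧ 0 < ρ ∧ ∀ w ∈ K, ∃ X : Fin d × Fin d → ℂ,
      (∀ p, X p ∈ K) ∧ IsFiberModel (g ∘ g) w (thickening ρ K) C X := by
  obtain ⟨C, ρ, hC, hρ, hmodel⟩ := exists_isFiberModel H hK hKinv
  have hKU' : K ⊆ U' := hKinv ▸ inter_subset_left
  have hKT : K ⊆ thickening ρ K := self_subset_thickening hρ K
  have hopen : IsOpen (U' ∩ g ⁻¹' thickening ρ K) :=
    H.holo.continuousOn.isOpen_inter_preimage H.disk'.1 isOpen_thickening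
  obtain ⟨ρ', hρ', hsub⟩ := hK.exists_thickening_subset_open (hopen.inter isOpen_thickening)
    fun z hz => ⟨⟨hKU' hz, hKT (hKinv.superset hz).2⟩, hKT hz⟩
  refine ⟨C ^ (Fintype.card (Fin d) + 1), ρ', one_le_pow₀ hC, hρ', fun w hw => ?_⟩
  obtain ⟨X, hXK, hX⟩ := hmodel w hw
  choose Y hYK hY using fun i => hmodel (X i) (hXK i)
  exact ⟨fun p => Y p.1 p.2, fun p => hYK p.1 p.2, hX.comp (zero_le_one.trans hC)
    (fun i => (hY i).mono fun z hz => (hsub hz).2) fun z hz => (hsub hz).1.2⟩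

end SecondIterate

section Potential

open scoped BigOperators

variable {κ ι : Type} {G : ℂ → ℂ} {E K S : Set ℂ} {C R c ρ σ : ℝ} {w z : ℂ}

/-- The logarithmic potential of the normalized counting measure of the family `Y` on `s`. -/
def logPotential (s : Finset κ) (Y : κ → ℂ) (z : ℂ) : ℝ := 𝔼 k ∈ s, -Real.log ‖z - Y k‖

/-- Some normalized counting measure on `E` has logarithmic potential at most `c` on `S`. When `S`
exhausts the complement of `E` this is a lower bound for the capacity of `E`. -/
def HasPotentialLE (E S : Set ℂ) (c : ℝ) : Prop :=
  ∃ (κ : Type) (s : Finset κ) (Y : κ → ℂ),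
    s.Nonempty ∧ (∀ k ∈ s, Y k ∈ E) ∧ ∀ z ∈ S, logPotential s Y z ≤ c

theorem HasPotentialLE.mono {c' : ℝ} (h : HasPotentialLE E S c) (hc : c ≤ c') :
    HasPotentialLE E S c' :=
  let ⟨κ, s, Y, hs, hY, hle⟩ := h
  ⟨κ, s, Y, hs, hY, fun z hz => (hle z hz).trans hc⟩

theorem le_norm_sub_of_notMem_thickening {x : ℂ} (hz : z ∉ thickening R K) (hx : x ∈ K) :
    R ≤ ‖z - x‖ := by
  rw [← dist_eq_norm]
  exact not_lt.1 fun h => hz (mem_thickening_iff.2 ⟨x, hx, h⟩)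

theorem logPotential_le_neg_log {s : Finset κ} {Y : κ → ℂ} (hs : s.Nonempty)
    (hR : 0 < R) (h : ∀ k ∈ s, R ≤ ‖z - Y k‖) : logPotential s Y z ≤ -Real.log R :=
  Finset.expect_le hs fun k hk => neg_le_neg (Real.log_le_log hR (h k hk))

theorem hasPotentialLE_neg_log (hK : K.Nonempty) (hR : 0 < R) :
    HasPotentialLE K (thickening R K)ᶜ (-Real.log R) := by
  obtain ⟨x, hx⟩ := hK
  exact ⟨Unit, Finset.univ, fun _ => x, Finset.univ_nonempty, fun _ _ => hx, fun z hz =>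
    logPotential_le_neg_log Finset.univ_nonempty hR fun _ _ =>
      le_norm_sub_of_notMem_thickening hz hx⟩

variable [Fintype ι]

theorem IsFiberModel.logPotential_le {T : Set ℂ} {X : ι → ℂ} (hX : IsFiberModel G w T C X)
    (hC : 0 < C) (hz : z ∈ T) (hzX : ∀ i, z ≠ X i) (hGz : G z ≠ w) :
    logPotential Finset.univ X z ≤ (Real.log C + -Real.log ‖G z - w‖) / Fintype.card ι := by
  have hpos (i) : ‖z - X i‖ ≠ 0 := norm_ne_zero_iff.2 (sub_ne_zero.2 (hzX i))
  have hlog := Real.log_le_log (norm_pos_iff.2 (sub_ne_zero.2 hGz)) (hX z hz).1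
  rw [Real.log_mul hC.ne' (Finset.prod_ne_zero_iff.2 fun i _ => hpos i),
    Real.log_prod fun i _ => hpos i] at hlog
  rw [logPotential, Finset.expect_eq_sum_div_card, Finset.card_univ, Finset.sum_neg_distrib]
  gcongr
  linarith

theorem HasPotentialLE.of_fiberModel [Nonempty ι] {R' : ℝ} (hC : 1 ≤ C) (hρ : 0 < ρ) (hR : 0 < R)
    (hR' : 0 < R') (hc : 0 ≤ c) (hmodel : ∀ w ∈ K, ∃ X : ι → ℂ, (∀ i, X i ∈ K) ∧
      IsFiberModel G w (thickening ρ K) C X)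
    (hG : ∀ z ∈ thickening ρ K, z ∉ thickening R K → G z ∉ thickening R' K)
    (h : HasPotentialLE K (thickening R' K)ᶜ c) :
    HasPotentialLE K (thickening R K)ᶜ
      (c / Fintype.card ι + (Real.log C + |Real.log ρ|)) := by
  classical
  obtain ⟨κ, s, Y, hs, hY, hle⟩ := h
  choose! X hXK hX using hmodel
  have hmem : ∀ p ∈ s ×ˢ (Finset.univ : Finset ι), X (Y p.1) p.2 ∈ K := fun p hp =>
    hXK _ (hY _ (Finset.mem_product.1 hp).1) _
  have hlogC : 0 ≤ Real.log C := Real.log_nonneg hC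
  have hN : (1 : ℝ) ≤ Fintype.card ι := by exact_mod_cast Fintype.card_pos
  refine ⟨κ × ι, s ×ˢ Finset.univ, fun p => X (Y p.1) p.2, hs.product Finset.univ_nonempty, hmem,
    fun z hz => ?_⟩
  by_cases hzT : z ∈ thickening ρ K
  · have hGz := hG z hzT hz
    have hne {x y : ℂ} {r : ℝ} (hr : 0 < r) (hx : x ∉ thickening r K) (hy : y ∈ K) : x ≠ y :=
      fun h => hx (h ▸ self_subset_thickening hr K hy)
    calc logPotential (s ×ˢ Finset.univ) (fun p => X (Y p.1) p.2) z
        = 𝔼 k ∈ s, logPotential Finset.univ (X (Y k)) z := Finset.expect_product _ _ _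
      _ ≤ 𝔼 k ∈ s, (Real.log C + -Real.log ‖G z - Y k‖) / Fintype.card ι :=
        Finset.expect_le_expect fun k hk => (hX _ (hY k hk)).logPotential_le (by linarith) hzT
          (fun i => hne hR hz (hXK _ (hY k hk) i)) (hne hR' hGz (hY k hk))
      _ = (Real.log C + logPotential s Y (G z)) / Fintype.card ι := by
        rw [← Finset.expect_div, Finset.expect_add_distrib, Finset.expect_const hs, logPotential]
      _ ≤ (Real.log C + c) / Fintype.card ι := by gcongr; exact hle _ hGz
      _ ≤ c / Fintype.card ι + (Real.log C + |Real.log ρ|) := by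
        rw [add_div]
        linarith [div_le_self hlogC hN, abs_nonneg (Real.log ρ)]
  · calc logPotential (s ×ˢ Finset.univ) (fun p => X (Y p.1) p.2) z ≤ -Real.log ρ :=
        logPotential_le_neg_log (hs.product Finset.univ_nonempty) hρ fun p hp =>
          le_norm_sub_of_notMem_thickening hzT (hmem p hp)
      _ ≤ c / Fintype.card ι + (Real.log C + |Real.log ρ|) := by
        have : 0 ≤ c / Fintype.card ι := by positivity
        linarith [neg_le_abs (Real.log ρ)]

/-- Every `w ∈ K` has a fibre model on `thickening ρ K` with points in `K`, two of which are at
distance at least `σ`. -/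
def HasSeparatedFiberModels (G : ℂ → ℂ) (K : Set ℂ) (ι : Type) [Fintype ι] (C ρ σ : ℝ) : Prop :=
  ∀ w ∈ K, ∃ X : ι → ℂ, (∀ i, X i ∈ K) ∧ IsFiberModel G w (thickening ρ K) C X ∧
    ∃ i j, σ ≤ dist (X i) (X j)

-- At most one of two points at distance `σ` is closer to `z` than `σ / 2`, so one factor of
-- `∏ i, ‖z - X i‖` is bounded below independently of `R`.
theorem HasSeparatedFiberModels.notMem_thickening (hX : HasSeparatedFiberModels G K ι C ρ σ)
    (hC : 0 ≤ C) (hσ : 0 < σ) (hR : 0 < R) (hz : z ∈ thickening ρ K) (hzR : z ∉ thickening R K) :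
    G z ∉ thickening (R ^ (Fintype.card ι - 1) / (1 + 2 * C / σ)) K := by
  classical
  intro hGz
  obtain ⟨w, hw, hwd⟩ := mem_thickening_iff.1 hGz
  obtain ⟨X, hXK, hmodel, a, b, hab⟩ := hX w hw
  obtain ⟨i, hi⟩ : ∃ i, σ / 2 ≤ ‖z - X i‖ := by
    by_contra! hlt
    have ha := hlt a
    have hb := hlt b
    rw [← dist_eq_norm] at ha hb
    linarith [dist_triangle_left (X a) (X b) z]
  have hothers : R ^ (Fintype.card ι - 1) ≤ ∏ j ∈ Finset.univ.erase i, ‖z - X j‖ := by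
    rw [← Finset.card_univ, ← Finset.card_erase_of_mem (Finset.mem_univ i), ← Finset.prod_const]
    exact Finset.prod_le_prod (fun _ _ => hR.le) fun j _ =>
      le_norm_sub_of_notMem_thickening hzR (hXK j)
  rw [dist_eq_norm, lt_div_iff₀ (by positivity)] at hwd
  refine hwd.not_ge ?_
  calc R ^ (Fintype.card ι - 1) = 2 / σ * (σ / 2 * R ^ (Fintype.card ι - 1)) := by field_simp
    _ ≤ 2 / σ * ∏ j, ‖z - X j‖ := by
      rw [← Finset.mul_prod_erase _ _ (Finset.mem_univ i)]
      gcongr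
    _ ≤ 2 / σ * (C * ‖G z - w‖) := by gcongr; exact (hmodel z hz).2
    _ = ‖G z - w‖ * (2 * C / σ) := by ring
    _ ≤ ‖G z - w‖ * (1 + 2 * C / σ) := by gcongr; linarith

-- The pull-back step replaces `-log R` by `(1 - 1 / N) (-log R)` up to bounded errors.
theorem HasSeparatedFiberModels.hasPotentialLE_iterate (hX : HasSeparatedFiberModels G K ι C ρ σ)
    (hK : K.Nonempty) (hC : 1 ≤ C) (hρ : 0 < ρ) (hσ : 0 < σ) (hι : 3 ≤ Fintype.card ι) (n : ℕ)
    (hR : 0 < R) (hR1 : R ≤ 1) :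
    HasPotentialLE K (thickening R K)ᶜ
      ((1 - 1 / Fintype.card ι : ℝ) ^ n * (-Real.log R + Real.log (1 + 2 * C / σ)) +
        2 * (Real.log C + |Real.log ρ|)) := by
  have hN : (3 : ℝ) ≤ Fintype.card ι := by exact_mod_cast hι
  have : Nonempty ι := Fintype.card_pos_iff.1 (by lia)
  have hcard : ((Fintype.card ι - 1 : ℕ) : ℝ) = Fintype.card ι - 1 := by
    rw [Nat.cast_sub (by lia), Nat.cast_one]
  set N := (Fintype.card ι : ℝ)
  have hC₁ : 1 ≤ 1 + 2 * C / σ := le_add_of_nonneg_right (by positivity)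
  set L := Real.log (1 + 2 * C / σ)
  set B := Real.log C + |Real.log ρ|
  have hL : 0 ≤ L := Real.log_nonneg hC₁
  have hB : 0 ≤ B := add_nonneg (Real.log_nonneg hC) (abs_nonneg _)
  have hq : 0 ≤ 1 - 1 / N := sub_nonneg.2 ((div_le_one (by linarith)).2 (by linarith))
  induction n generalizing R with
  | zero => exact (hasPotentialLE_neg_log hK hR).mono (by simp only [pow_zero]; linarith)
  | succ n ih =>
    set R' := R ^ (Fintype.card ι - 1) / (1 + 2 * C / σ) with hR'def
    have hR' : 0 < R' := by positivity
    have hR'1 : R' ≤ 1 := div_le_one_of_le₀ ((pow_le_one₀ hR.le hR1).trans hC₁) (by positivity)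
    have hlog : -Real.log R' = (N - 1) * -Real.log R + L := by
      rw [hR'def, Real.log_div (by positivity) (by positivity), Real.log_pow, hcard]
      ring
    have hlogR' := Real.log_nonpos hR'.le hR'1
    refine (HasPotentialLE.of_fiberModel hC hρ hR hR'
      (add_nonneg (mul_nonneg (pow_nonneg hq n) (by linarith)) (by positivity))
      (fun w hw => let ⟨X, hXK, hXw, _⟩ := hX w hw; ⟨X, hXK, hXw⟩)
      (fun z hz hzR => hX.notMem_thickening (zero_le_one.trans hC) hσ hR hz hzR)
      (ih hR' hR'1)).mono ?_
    have hmain : (-Real.log R' + L) / N ≤ (1 - 1 / N) * (-Real.log R + L) := by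
      rw [hlog, div_le_iff₀ (by linarith)]
      field_simp
      nlinarith
    have herr : 2 * B / N ≤ B := (div_le_iff₀ (by linarith)).2 (by nlinarith)
    have := mul_le_mul_of_nonneg_left hmain (pow_nonneg hq n)
    rw [add_div, mul_div_assoc, pow_succ]
    linarith

theorem HasSeparatedFiberModels.exists_hasPotentialLE (hX : HasSeparatedFiberModels G K ι C ρ σ)
    (hK : K.Nonempty) (hC : 1 ≤ C) (hρ : 0 < ρ) (hσ : 0 < σ) (hι : 3 ≤ Fintype.card ι) :
    ∃ c, 0 ≤ c ∧ ∀ R, 0 < R → R ≤ 1 → HasPotentialLE K (thickening R K)ᶜ c := by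
  have hB : 0 ≤ Real.log C + |Real.log ρ| := add_nonneg (Real.log_nonneg hC) (abs_nonneg _)
  refine ⟨1 + 2 * (Real.log C + |Real.log ρ|), by positivity, fun R hR hR1 => ?_⟩
  have hN : (3 : ℝ) ≤ Fintype.card ι := by exact_mod_cast hι
  have hlim := (tendsto_pow_atTop_nhds_zero_of_lt_one (r := 1 - 1 / (Fintype.card ι : ℝ))
    (sub_nonneg.2 ((div_le_one (by linarith)).2 (by linarith)))
    (sub_lt_self _ (by positivity))).mul_const (-Real.log R + Real.log (1 + 2 * C / σ))
  rw [zero_mul] at hlim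
  obtain ⟨n, hn⟩ := (hlim.eventually_lt_const one_pos).exists
  exact (hX.hasPotentialLE_iterate hK hC hρ hσ hι n hR hR1).mono (by linarith)

end Potential

section Localization

open scoped BigOperators

variable {κ : Type} {E K S : Set ℂ} {c ε : ℝ} {z : ℂ}

theorem harmonicAt_logPotential {s : Finset κ} {Y : κ → ℂ} (h : ∀ k ∈ s, z ≠ Y k) :
    HarmonicAt (logPotential s Y) z := by
  classical
  have hsum : HarmonicAt (fun y => ∑ k ∈ s, -Real.log ‖y - Y k‖) z := by
    induction s using Finset.induction_on with
    | empty => simpa only [Finset.sum_empty] using harmonicAt_const 0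
    | insert k s hk ih =>
      simp only [Finset.sum_insert hk]
      exact (harmonicAt_log_norm_sub (h k (s.mem_insert_self k))).neg.add
        (ih fun i hi => h i (Finset.mem_insert_of_mem hi))
  convert hsum.const_smul (c := ((s.card : ℝ)⁻¹)) using 1
  funext y
  simp only [logPotential, Finset.expect_eq_sum_div_card, Pi.smul_apply, smul_eq_mul,
    div_eq_inv_mul]

theorem expect_le_mul_expect_of_subset {s₁ s₂ : Finset κ} {f : κ → ℝ} {N : ℝ} (hsub : s₁ ⊆ s₂)
    (hs₁ : s₁.Nonempty) (hN : (s₂.card : ℝ) ≤ N * s₁.card) (hf : ∀ k ∈ s₂, 0 ≤ f k) :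
    𝔼 k ∈ s₁, f k ≤ N * 𝔼 k ∈ s₂, f k := by
  have h₁ : (0 : ℝ) < s₁.card := by exact_mod_cast hs₁.card_pos
  have h₂ : (0 : ℝ) < s₂.card := by exact_mod_cast (hs₁.mono hsub).card_pos
  have hsum : 0 ≤ ∑ k ∈ s₂, f k := Finset.sum_nonneg hf
  rw [Finset.expect_eq_sum_div_card, Finset.expect_eq_sum_div_card, div_le_iff₀ h₁]
  calc ∑ k ∈ s₁, f k ≤ ∑ k ∈ s₂, f k :=
        Finset.sum_le_sum_of_subset_of_nonneg hsub fun k hk _ => hf k hk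
    _ = s₂.card * ((∑ k ∈ s₂, f k) / s₂.card) := by field_simp
    _ ≤ N * s₁.card * ((∑ k ∈ s₂, f k) / s₂.card) := by gcongr
    _ = N * ((∑ k ∈ s₂, f k) / s₂.card) * s₁.card := by ring

-- Near a piece of the measure the potentials of the other pieces are bounded below, so that of
-- the piece is bounded above; at distance at least `1` it is nonpositive.
theorem logPotential_le_of_subset {s₁ s₂ : Finset κ} {Y : κ → ℂ} {D N : ℝ} (hsub : s₁ ⊆ s₂)
    (hs₁ : s₁.Nonempty) (hN : (s₂.card : ℝ) ≤ N * s₁.card) (hN₀ : 0 ≤ N) (hD₀ : 0 ≤ D)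
    (hD : ∀ j ∈ s₂, ∀ k ∈ s₂, dist (Y j) (Y k) ≤ D) (hc : 0 ≤ c) (hle : logPotential s₂ Y z ≤ c) :
    logPotential s₁ Y z ≤ N * (c + Real.log (1 + D)) := by
  have hM : 0 ≤ Real.log (1 + D) := Real.log_nonneg (le_add_of_nonneg_right hD₀)
  by_cases hfar : ∀ k ∈ s₁, 1 ≤ ‖z - Y k‖
  · refine (logPotential_le_neg_log hs₁ one_pos hfar).trans ?_
    rw [Real.log_one, neg_zero]
    positivity
  push Not at hfar
  obtain ⟨j, hj, hnear⟩ := hfar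
  have hlog : ∀ k ∈ s₂, 0 ≤ -Real.log ‖z - Y k‖ + Real.log (1 + D) := fun k hk => by
    have hnorm : ‖z - Y k‖ ≤ 1 + D := by
      rw [← dist_eq_norm] at hnear ⊢
      exact (dist_triangle _ _ _).trans (add_le_add hnear.le (hD j (hsub hj) k hk))
    rcases (norm_nonneg (z - Y k)).eq_or_lt' with h0 | hpos
    · simpa only [h0, Real.log_zero, neg_zero, zero_add] using hM
    · linarith [Real.log_le_log hpos hnorm]
  calc logPotential s₁ Y z ≤ logPotential s₁ Y z + Real.log (1 + D) := le_add_of_nonneg_right hM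
    _ = 𝔼 k ∈ s₁, (-Real.log ‖z - Y k‖ + Real.log (1 + D)) := by
      rw [Finset.expect_add_distrib, Finset.expect_const hs₁, logPotential]
    _ ≤ N * 𝔼 k ∈ s₂, (-Real.log ‖z - Y k‖ + Real.log (1 + D)) :=
      expect_le_mul_expect_of_subset hsub hs₁ hN hlog
    _ = N * (logPotential s₂ Y z + Real.log (1 + D)) := by
      rw [Finset.expect_add_distrib, Finset.expect_const (hs₁.mono hsub), logPotential]
    _ ≤ N * (c + Real.log (1 + D)) := by gcongr

theorem HasPotentialLE.exists_inter_ball (h : HasPotentialLE E S c) (hE : Bornology.IsBounded E)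
    {t : Finset ℂ} (ht : E ⊆ ⋃ x ∈ t, ball x ε) (hc : 0 ≤ c) :
    ∃ x ∈ t, HasPotentialLE (E ∩ ball x ε) S (t.card * (c + Real.log (1 + diam E))) := by
  classical
  obtain ⟨κ, s, Y, hs, hY, hle⟩ := h
  choose! φ hφt hφ using fun k (hk : k ∈ s) => mem_iUnion₂.1 (ht (hY k hk))
  have htne : t.Nonempty := let ⟨k, hk⟩ := hs; ⟨φ k, hφt k hk⟩
  have hspos : (0 : ℝ) < s.card := by exact_mod_cast hs.card_pos
  have htpos : (0 : ℝ) < t.card := by exact_mod_cast htne.card_pos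
  obtain ⟨x, hx, hcard⟩ := Finset.exists_le_card_fiber_of_nsmul_le_card_of_maps_to hφt htne
    (b := (s.card / t.card : ℝ)) (by rw [nsmul_eq_mul, mul_div_cancel₀ _ htpos.ne'])
  set s' := s.filter (φ · = x)
  have hs' : s'.Nonempty :=
    Finset.card_pos.1 (by exact_mod_cast (div_pos hspos htpos).trans_le hcard)
  have hsub : s' ⊆ s := Finset.filter_subset _ _
  exact ⟨x, hx, κ, s', Y, hs',
    fun k hk => ⟨hY k (hsub hk), (Finset.mem_filter.1 hk).2 ▸ hφ k (hsub hk)⟩,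
    fun z hz => logPotential_le_of_subset hsub hs' ((div_le_iff₀' htpos).1 hcard) htpos.le
      diam_nonneg (fun j hj k hk => dist_le_diam_of_mem hE (hY j hj) (hY k hk)) hc (hle z hz)⟩

end Localization

section CompactSets

variable {κ : Type} {K U : Set ℂ} {v : ℂ → ℝ} {c ε L R : ℝ} {x z : ℂ}

theorem neg_log_le_logPotential {s : Finset κ} {Y : κ → ℂ} (hs : s.Nonempty)
    (hne : ∀ k ∈ s, z ≠ Y k) (hle : ∀ k ∈ s, ‖z - Y k‖ ≤ R) :
    -Real.log R ≤ logPotential s Y z :=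
  Finset.le_expect hs fun k hk =>
    neg_le_neg (Real.log_le_log (norm_pos_iff.2 (sub_ne_zero.2 (hne k hk))) (hle k hk))

theorem exists_frequently_hasPotentialLE_inter_ball (hK : IsCompact K) (hc : 0 ≤ c)
    (hpot : ∀ R, 0 < R → R ≤ 1 → HasPotentialLE K (thickening R K)ᶜ c) (hε : 0 < ε) :
    ∃ x ∈ K, ∃ c', ∃ᶠ R in 𝓝[>] (0 : ℝ), HasPotentialLE (K ∩ ball x ε) (thickening R K)ᶜ c' := by
  obtain ⟨t, htK, ht⟩ := hK.elim_nhds_subcover (fun x => ball x ε) fun x _ => ball_mem_nhds x hε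
  have hev : ∀ᶠ R in 𝓝[>] (0 : ℝ), ∃ x ∈ t,
      HasPotentialLE (K ∩ ball x ε) (thickening R K)ᶜ (t.card * (c + Real.log (1 + diam K))) := by
    filter_upwards [Ioc_mem_nhdsGT one_pos] with R hR
    exact (hpot R hR.1 hR.2).exists_inter_ball hK.isBounded ht hc
  obtain ⟨x, hx, hfreq⟩ := (Filter.frequently_exists_finset t).1 hev.frequently
  exact ⟨x, htK x hx, _, hfreq⟩

theorem le_one_sub_mul_logPotential {s : Finset κ} {Y : κ → ℂ} {a : ℝ} (hv : v ∈ admissible K U)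
    (hR : 0 < R) (hvR : ∀ y ∈ cthickening R K, v y ≤ 1 / 2) (hL : 0 < L)
    (hball : closedBall x L ⊆ U) (hs : s.Nonempty) (hY : ∀ k ∈ s, Y k ∈ K ∩ ball x (L / 4))
    (ha : 0 ≤ a)
    (hle : ∀ y ∉ thickening R K, a * (logPotential s Y y + Real.log (3 * L / 4)) ≤ 1 / 2)
    (hz : z ∈ ball x L \ cthickening R K) :
    v z ≤ 1 - a * (logPotential s Y z + Real.log (3 * L / 4)) := by
  have hne : ∀ y ∉ thickening R K, ∀ k ∈ s, y ≠ Y k := fun y hy k hk hyk =>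
    hy (hyk ▸ self_subset_thickening hR K (hY k hk).1)
  have hh : HarmonicOnNhd (fun y => 1 - a * (logPotential s Y y + Real.log (3 * L / 4)))
      (thickening R K)ᶜ := fun y hy =>
    (harmonicAt_const 1).sub (((harmonicAt_logPotential (hne y hy)).add
      (harmonicAt_const _)).const_smul (c := a))
  have hBo : IsOpen (ball x L \ cthickening R K) := isOpen_ball.sdiff isClosed_cthickening
  have hcl : closure (ball x L \ cthickening R K) ⊆ closedBall x L ∩ (thickening R K)ᶜ :=
    closure_minimal (inter_subset_inter ball_subset_closedBall
      (compl_subset_compl.2 (thickening_subset_cthickening R K)))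
      (isClosed_closedBall.inter isOpen_thickening.isClosed_compl)
  have hclU := hcl.trans (inter_subset_left.trans hball)
  refine (hv.1.mono (subset_closure.trans hclU)).le_of_le_on_frontier hBo
    ((isCompact_closedBall x L).of_isClosed_subset isClosed_closure fun y hy => (hcl hy).1)
    (hv.1.1.mono hclU) (fun y hy => (hh y (hcl hy).2).1.continuousAt.continuousWithinAt)
    (fun y hy => hh y (hcl (subset_closure hy)).2) (fun y hy => ?_) z hz
  have hyR := (hcl hy.1).2
  by_cases hyc : y ∈ cthickening R K
  · linarith [hvR y hyc, hle y hyR]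
  have hyL : L ≤ dist y x := not_lt.1 fun hlt => hy.2 (hBo.interior_eq.symm ▸ ⟨hlt, hyc⟩)
  have hp : logPotential s Y y ≤ -Real.log (3 * L / 4) :=
    logPotential_le_neg_log hs (by positivity) fun k hk => by
      have hk' : dist (Y k) x < L / 4 := (hY k hk).2
      rw [← dist_eq_norm]
      linarith [dist_triangle y (Y k) x]
  linarith [hv.2.1 y (hclU hy.1), mul_nonpos_of_nonneg_of_nonpos ha (by linarith only [hp] :
    logPotential s Y y + Real.log (3 * L / 4) ≤ 0)]

theorem le_one_sub_of_hasPotentialLE (hv : v ∈ admissible K U) (hR : 0 < R)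
    (hvR : ∀ y ∈ cthickening R K, v y ≤ 1 / 2) (hL : 0 < L) (hball : closedBall x L ⊆ U)
    (hpot : HasPotentialLE (K ∩ ball x (L / 4)) (thickening R K)ᶜ c) (hz : z ∈ ball x (L / 4)) :
    v z ≤ 1 - min (1 / 2) (Real.log (3 / 2) / (2 * (|c + Real.log (3 * L / 4)| + 1))) := by
  obtain ⟨κ, s, Y, hs, hY, hle⟩ := hpot
  set m := Real.log (3 * L / 4) with hm
  set a := (2 * (|c + m| + 1))⁻¹
  have ha : 0 < a := by positivity
  rw [div_eq_inv_mul (Real.log (3 / 2))]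
  by_cases hzR : z ∈ cthickening R K
  · linarith [hvR z hzR, min_le_left (1 / 2) (a * Real.log (3 / 2))]
  have hac : a * (c + m) ≤ 1 / 2 := by
    rw [inv_mul_le_iff₀ (by positivity)]
    linarith [le_abs_self (c + m)]
  have hzL : z ∈ ball x L := ball_subset_ball (by linarith) hz
  have hzT : z ∉ thickening R K := fun h => hzR (thickening_subset_cthickening R K h)
  have hv_le := le_one_sub_mul_logPotential hv hR hvR hL hball hs hY ha.le
    (fun y hy => (mul_le_mul_of_nonneg_left (by linarith only [hle y hy]) ha.le).trans hac)
    ⟨hzL, hzR⟩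
  have hp : Real.log (3 / 2) - m ≤ logPotential s Y z := by
    have hdist : ∀ k ∈ s, ‖z - Y k‖ ≤ L / 2 := fun k hk => by
      have hk' : dist (Y k) x < L / 4 := (hY k hk).2
      have hz' : dist z x < L / 4 := hz
      rw [← dist_eq_norm]
      linarith [dist_triangle_right z (Y k) x]
    refine le_trans (le_of_eq ?_) (neg_log_le_logPotential hs
      (fun k hk hzk => hzT (hzk ▸ self_subset_thickening hR K (hY k hk).1)) hdist)
    rw [hm, ← Real.log_div (by norm_num) (by positivity), ← Real.log_inv]
    congr 1
    field_simp
    norm_num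
  have := mul_le_mul_of_nonneg_left (by linarith : Real.log (3 / 2) ≤ logPotential s Y z + m) ha.le
  linarith [min_le_right (1 / 2) (a * Real.log (3 / 2))]

theorem gainSet_nonempty_of_hasPotentialLE (hU : IsOpen U) (hKU : K ⊆ U) (hK : IsCompact K)
    (hc : 0 ≤ c) (hpot : ∀ R, 0 < R → R ≤ 1 → HasPotentialLE K (thickening R K)ᶜ c) :
    (U ∩ gainSet (admissible K U) ∅ U).Nonempty := by
  obtain ⟨L, hL, hLU⟩ := hK.exists_cthickening_subset_open hU hKU
  obtain ⟨x, hx, c', hfreq⟩ :=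
    exists_frequently_hasPotentialLE_inter_ball hK hc hpot (ε := L / 4) (by positivity)
  have hball : closedBall x L ⊆ U := (closedBall_subset_cthickening hx L).trans hLU
  have hlog : 0 < Real.log (3 / 2) := Real.log_pos (by norm_num)
  refine ⟨x, hKU hx, min (1 / 2) (Real.log (3 / 2) / (2 * (|c' + Real.log (3 * L / 4)| + 1))),
    lt_min one_half_pos (div_pos hlog (by positivity)), L / 4, by positivity,
    fun v hv => ⟨fun _ => 1, ⟨.of_harmonicOnNhd fun y _ => harmonicAt_const 1, fun _ _ => le_rfl,
      by simp⟩, hv.2.1, fun y hy => ?_⟩⟩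
  obtain ⟨r, hr, hrsub⟩ := hK.exists_cthickening_subset_open
    (hv.1.1.isOpen_inter_preimage hU (isOpen_Iio (a := 1 / 2)))
    fun y hy => ⟨hKU hy, (hv.2.2 y hy).trans_lt (by norm_num)⟩
  obtain ⟨R, hpotR, hR⟩ := (hfreq.and_eventually (Ioc_mem_nhdsGT hr)).exists
  linarith [le_one_sub_of_hasPotentialLE hv hR.1
    (fun y hy => (hrsub (cthickening_mono hR.2 K hy)).2.le) hL hball hpotR hy]

end CompactSets

section Dynamics

variable {g : ℂ → ℂ} {U U' K : Set ℂ} {d p : ℕ} {a b : ℂ}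

theorem PLSetting.gainSet_nonempty (H : PLSetting g U' U d) (hK : IsCompact K)
    (hKinv : U' ∩ g ⁻¹' K = K) (hcK : critPts g U' ⊆ K) :
    (U ∩ gainSet (admissible K U) ∅ U).Nonempty := by
  obtain ⟨C, ρ, hC, hρ, hmodel⟩ := exists_isFiberModel_comp_self H hK hKinv
  have hd := H.two_le_d
  have : Nonempty (Fin d) := ⟨⟨0, by lia⟩⟩
  obtain ⟨σ, hσ, hsep⟩ := exists_le_dist_of_nontrivial_fiber (ι := Fin d × Fin d) (C := C) hK
    (self_subset_thickening hρ K) fun w hw => H.nontrivial_fiber_comp_self hK hKinv hcK hw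
  have hmodels : HasSeparatedFiberModels (g ∘ g) K (Fin d × Fin d) C ρ σ := fun w hw =>
    let ⟨X, hXK, hX⟩ := hmodel w hw
    ⟨X, hXK, hX, hsep w hw X hXK hX⟩
  have hcard : 3 ≤ Fintype.card (Fin d × Fin d) := by
    rw [Fintype.card_prod, Fintype.card_fin]
    nlinarith
  obtain ⟨c, hc, hpot⟩ :=
    hmodels.exists_hasPotentialLE (H.critPts_nonempty.mono hcK) hC hρ hσ hcard
  exact gainSet_nonempty_of_hasPotentialLE H.disk.1 (fun z hz => H.subset (hKinv.superset hz).1)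
    hK hc hpot

theorem PLSetting.exists_mem_closure_notMem (H : PLSetting g U' U d) :
    ∃ q ∈ U, q ∉ U' ∧ q ∈ closure U' := by
  by_contra! hcon
  refine H.ne (H.subset.antisymm ?_)
  refine H.disk.2.1.isPreconnected.subset_of_closure_inter_subset H.disk'.1
    (H.disk'.2.1.nonempty.mono fun z hz => ⟨H.subset hz, hz⟩) fun z hz => ?_
  exact by_contra fun h => hcon z hz.2 h hz.1

theorem PLSetting.diff_subset_gainSet_admissible (H : PLSetting g U' U d) (hK : IsCompact K)
    (hKc : IsPreconnected Kᶜ) (hKinv : U' ∩ g ⁻¹' K = K) (hcK : critPts g U' ⊆ K) :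
    U' \ K ⊆ gainSet (admissible K U) K U' := by
  have hKU' : K ⊆ U' := fun z hz => (hKinv.superset hz).1
  have hsub : ∀ v ∈ admissible K U, IsSubharmonicOn v U := fun v hv => hv.1
  have hUgain : U ⊆ gainSet (admissible K U) ∅ U := by
    simpa only [sdiff_empty] using diff_subset_gainSet hsub H.disk.1 isClosed_empty
      (by simpa only [sdiff_empty] using H.disk.2.1.isPreconnected)
      (by simpa only [sdiff_empty] using H.gainSet_nonempty hK hKinv hcK)
  obtain ⟨q, hqU, hqU', hqcl⟩ := H.exists_mem_closure_notMem
  obtain ⟨δ, hδ, r, hr, hgain⟩ := hUgain hqU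
  obtain ⟨r', hr', hball⟩ := Metric.isOpen_iff.1 hK.isClosed.isOpen_compl q fun h => hqU' (hKU' h)
  refine diff_subset_gainSet (fun v hv => (hsub v hv).mono H.subset) H.disk'.1 hK.isClosed
    (isPreconnected_inter_of_union_eq_univ H.disk'.1 hK.isClosed.isOpen_compl
      H.disk'.2.1.isPreconnected hKc ?_)
    (gainSet_nonempty_of_le_one_sub (R := min r r') H.disk'.2.2 H.disk'.1
      (fun v hv => ⟨hv.1.mono H.subset, fun z hz => hv.2.1 z (H.subset hz), hv.2.2⟩)
      hqU' hqcl (lt_min hr hr') hδ ?_ fun v hv z hz => ?_)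
  · exact eq_univ_of_forall fun z => (em (z ∈ K)).imp (@hKU' z) id
  · exact disjoint_left.2 fun z hz => hball (ball_subset_ball (min_le_right _ _) hz)
  · obtain ⟨v', hv', -, hle⟩ := hgain v hv
    linarith [hle z (ball_subset_ball (min_le_left _ _) hz.2), hv'.2.1 z (H.subset hz.1)]

theorem PLSetting.fiberMax_mem_admissible (H : PLSetting g U' U d) {v : ℂ → ℝ}
    (hKinv : U' ∩ g ⁻¹' K = K) (hv : v ∈ admissible K U') :
    fiberMax g U' v ∈ admissible K U := by
  have hopen := nhds_le_map_nhds_of_surjective H.disk'.1 H.disk'.2.1.isPreconnected H.disk.1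
    H.disk.2.1.nonempty H.holo H.deg.1
  refine ⟨hv.1.fiberMax H.disk.1 H.disk'.1 H.holo H.proper H.mapsTo H.deg.1 hopen,
    fun y hy => ?_, fun y hy => ?_⟩
  · obtain ⟨x, hx, -, hmax⟩ := exists_fiberMax_eq H.proper H.deg.1 hv.1.1 hy
    exact hmax ▸ hv.2.1 x hx
  · obtain ⟨x, hx, rfl, hmax⟩ :=
      exists_fiberMax_eq H.proper H.deg.1 hv.1.1 (H.subset (hKinv.superset hy).1)
    exact hmax ▸ hv.2.2 x (hKinv.subset ⟨hx, hy⟩)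

theorem PLSetting.exists_add_le_apply (H : PLSetting g U' U d) (hK : IsCompact K)
    (hKc : IsPreconnected Kᶜ) (hKinv : U' ∩ g ⁻¹' K = K) (hcK : critPts g U' ⊆ K)
    (hb : b ∈ U' \ K) :
    ∃ δ > 0, ∀ v ∈ admissible K U, ∃ w ∈ admissible K U, v b + δ ≤ w (g b) := by
  obtain ⟨δ, hδ, r, hr, hgain⟩ := H.diff_subset_gainSet_admissible hK hKc hKinv hcK hb
  refine ⟨δ, hδ, fun v hv => ?_⟩
  obtain ⟨v', hv', -, hle⟩ := hgain v hv
  exact ⟨fiberMax g U' v', H.fiberMax_mem_admissible hKinv hv',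
    (hle b (mem_ball_self hr)).trans (le_fiberMax H.proper H.mapsTo hv'.1.1 hb.1)⟩

theorem iterate_notMem (hKinv : U' ∩ g ⁻¹' K = K) (ha : a ∉ K) (horbit : ∀ k < p, g^[k] a ∈ U') :
    g^[p] a ∉ K := by
  induction p with
  | zero => exact ha
  | succ p ih =>
    rw [iterate_succ_apply', apply_mem_iff_of_inter_preimage_eq hKinv (horbit p p.lt_succ_self)]
    exact ih fun k hk => horbit k (hk.trans p.lt_succ_self)

theorem PLSetting.exists_add_le_iterate (H : PLSetting g U' U d) (hK : IsCompact K)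
    (hKc : IsPreconnected Kᶜ) (hKinv : U' ∩ g ⁻¹' K = K) (hcK : critPts g U' ⊆ K) (ha : a ∉ K)
    (hp : 1 ≤ p) (horbit : ∀ k < p, g^[k] a ∈ U') :
    ∃ δ > 0, ∀ v ∈ admissible K U, ∃ w ∈ admissible K U, v a + δ ≤ w (g^[p] a) := by
  induction p, hp using Nat.le_induction with
  | base => exact H.exists_add_le_apply hK hKc hKinv hcK ⟨horbit 0 one_pos, ha⟩
  | succ p _ ih =>
    have horbit' : ∀ k < p, g^[k] a ∈ U' := fun k hk => horbit k (hk.trans p.lt_succ_self)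
    obtain ⟨δ, hδ, hgain⟩ := ih horbit'
    obtain ⟨δ', hδ', hgain'⟩ := H.exists_add_le_apply hK hKc hKinv hcK
      ⟨horbit p p.lt_succ_self, iterate_notMem hKinv ha horbit'⟩
    refine ⟨δ, hδ, fun v hv => ?_⟩
    obtain ⟨w, hw, hvw⟩ := hgain v hv
    obtain ⟨w', hw', hww'⟩ := hgain' w hw
    rw [iterate_succ_apply']
    exact ⟨w', hw', by linarith⟩

end Dynamics

theorem no_repelling_outside_general {g : ℂ → ℂ} {U' U : Set ℂ} {d : ℕ} (H : PLSetting g U' U d)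
    {K : Set ℂ} (hK : IsCompact K) (hKc : IsPreconnected Kᶜ) (hKinv : U' ∩ g ⁻¹' K = K)
    (hcK : critPts g U' ⊆ K) :
    ¬ ∃ (p : ℕ) (a : ℂ), 1 ≤ p ∧ a ∉ K ∧ (∀ k < p, g^[k] a ∈ U') ∧ g^[p] a = a := by
  rintro ⟨p, a, hp, ha, horbit, hper⟩
  obtain ⟨δ, hδ, hgain⟩ := H.exists_add_le_iterate hK hKc hKinv hcK ha hp horbit
  rw [hper] at hgain
  have hunbounded : ∀ n : ℕ, ∃ v ∈ admissible K U, n * δ ≤ v a := fun n => by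
    induction n with
    | zero =>
      exact ⟨0, ⟨.of_harmonicOnNhd fun z _ => harmonicAt_const 0, by simp, by simp⟩, by simp⟩
    | succ n ih =>
      obtain ⟨v, hv, hnv⟩ := ih
      obtain ⟨w, hw, hvw⟩ := hgain v hv
      exact ⟨w, hw, by push_cast; linarith⟩
  obtain ⟨n, hn⟩ := exists_nat_gt (1 / δ)
  obtain ⟨v, hv, hnv⟩ := hunbounded n
  rw [div_lt_iff₀ hδ] at hn
  linarith [hv.2.1 a (H.subset (horbit 0 hp))]

/-- **Theorem.** If `K ⊆ U` is a full compact set which is completely invariant and contains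
the postcritical set, then `g : U' → U` has no repelling periodic points outside of `K`:
there is no `p ≥ 1` and `a ∈ g^{-p}(U) \ K` with `g^p(a) = a` and `|(g^p)'(a)| > 1`. -/
theorem no_repelling_outside {g : ℂ → ℂ} {U' U : Set ℂ} {d : ℕ}
    (H : PLSetting g U' U d) {K : Set ℂ}
    (hKU : K ⊆ U) (hKcomp : IsCompact K) (hKfull : IsConnected Kᶜ)
    (hKinv : U' ∩ g ⁻¹' K = K) (hPK : postCrit g U' ⊆ K) :
    ¬ ∃ (p : ℕ) (a : ℂ), 1 ≤ p ∧ a ∉ K ∧ (∀ k < p, g^[k] a ∈ U') ∧ g^[p] a ∈ U ∧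
        g^[p] a = a ∧ 1 < ‖deriv (g^[p]) a‖ := fun ⟨p, a, hp, ha, horbit, _, hper, _⟩ =>
  no_repelling_outside_general H hKcomp hKfull.isPreconnected hKinv
    (fun _ hc => hPK (subset_closure (mem_iUnion.2 ⟨0, _, hc, rfl⟩))) ⟨p, a, hp, ha, horbit, hper⟩
end
end

section
/- Let K_* ⊂ U be the unique maximal (by inclusion) full compact set with g⁻¹(K_*) = K_*. If Z is any compact set (not necessarily full) with g⁻¹(Z) = Z, then Z ⊂ K_*. -/
/-!
The idea is to fill in the holes of `Z`. Its full hull `K`, the union of `Z` and the bounded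
components of `ℂ \ Z`, is compact and full. It lies in `U'` because a simply connected domain has
no holes: if a bounded component `C` of `ℂ \ Z` contained a point `a ∉ U'`, a branch of
`log (z - a)` on `U'` would yield, via a nonvanishing continuous extension of `z - a` from `∂C` to
`C`, a branch of `log (z - a)` on a large circle around `a`.

Complete invariance passes from `Z` to `K` by a maximum principle: a bounded set whose frontier
lies in `Z` is contained in `K`. Since `g` is open, the frontier of the compact set `g(K)` is
contained in `g(Z) ⊆ Z`; since `g` is proper, `g⁻¹(K)` is compact and its frontier is contained in
`g⁻¹(Z) = Z`. Hence `K` is one of the sets over which `K_*` is maximal.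
-/

open Set Function Metric Topology Filter

noncomputable section

theorem subset_of_isPreconnected_of_disjoint_frontier {X : Type*} [TopologicalSpace X]
    {C T : Set X} (hC : IsPreconnected C) (hCT : (C ∩ T).Nonempty)
    (hfr : Disjoint C (frontier T)) : C ⊆ T := by
  have mem_interior {x : X} (hxC : x ∈ C) (hxT : x ∈ closure T) : x ∈ interior T := by
    by_contra hx
    exact disjoint_left.1 hfr hxC ⟨hxT, hx⟩
  obtain ⟨x, hxC, hxT⟩ := hCT
  have hsub : C ⊆ interior T :=
    hC.subset_of_closure_inter_subset isOpen_interior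
      ⟨x, hxC, mem_interior hxC (subset_closure hxT)⟩
      fun y ⟨hyT, hyC⟩ ↦ mem_interior hyC (closure_mono interior_subset hyT)
  exact hsub.trans interior_subset

theorem frontier_subset_sdiff_of_isOpen {X : Type*} [TopologicalSpace X] {S T : Set X}
    (hT : IsClosed T) (hS : IsOpen S) (hST : S ⊆ T) : frontier T ⊆ T \ S := by
  rw [hT.frontier_eq]
  exact sdiff_subset_sdiff_right (interior_maximal hST hS)

theorem disjoint_frontier_connectedComponentIn {X : Type*} [TopologicalSpace X]
    [LocallyConnectedSpace X] {F : Set X} (hF : IsOpen F) (x : X) :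
    Disjoint (frontier (connectedComponentIn F x)) F := by
  refine disjoint_left.2 fun y hy hyF ↦ ?_
  rw [hF.connectedComponentIn.frontier_eq] at hy
  obtain ⟨w, hwy, hwx⟩ := mem_closure_iff.1 hy.1 _ hF.connectedComponentIn
    (mem_connectedComponentIn hyF)
  rw [connectedComponentIn_eq hwx, ← connectedComponentIn_eq hwy] at hy
  exact hy.2 (mem_connectedComponentIn hyF)

theorem isPreconnected_compl_closedBall {E : Type*} [NormedAddCommGroup E] [NormedSpace ℝ E]
    (h : 1 < Module.rank ℝ E) (x : E) (r : ℝ) : IsPreconnected (closedBall x r)ᶜ := by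
  rcases lt_or_ge r 0 with hr | hr
  · simpa [closedBall_eq_empty.2 hr] using isPreconnected_univ
  have himage : (closedBall x r)ᶜ = (fun p : E × ℝ ↦ x + p.2 • p.1) '' sphere 0 1 ×ˢ Ioi r := by
    ext z
    simp only [mem_compl_iff, mem_closedBall, not_le, dist_eq_norm, mem_image, mem_prod,
      mem_sphere_zero_iff_norm, mem_Ioi, Prod.exists]
    constructor
    · intro hz
      have hpos : 0 < ‖z - x‖ := hr.trans_lt hz
      refine ⟨‖z - x‖⁻¹ • (z - x), ‖z - x‖, ⟨?_, hz⟩, ?_⟩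
      · rw [norm_smul, norm_inv, norm_norm, inv_mul_cancel₀ hpos.ne']
      · rw [smul_inv_smul₀ hpos.ne', add_sub_cancel]
    · rintro ⟨v, t, ⟨hv, ht⟩, rfl⟩
      rwa [add_sub_cancel_left, norm_smul, hv, mul_one, Real.norm_of_nonneg (hr.trans ht.le)]
  rw [himage]
  exact ((isPreconnected_sphere h 0 1).prod isPreconnected_Ioi).image _ (by fun_prop)

section FullHull

open Bornology

/-- The full hull of `Z`: the union of `Z` and the bounded connected components of its complement.
The points of `Z` are included because `connectedComponentIn Zᶜ z = ∅` for `z ∈ Z`. -/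
def fullHull {X : Type*} [PseudoMetricSpace X] (Z : Set X) : Set X :=
  {z | IsBounded (connectedComponentIn Zᶜ z)}

section PseudoMetricSpace

variable {X : Type*} [PseudoMetricSpace X] {Z T : Set X} {z w : X}

theorem mem_fullHull : z ∈ fullHull Z ↔ IsBounded (connectedComponentIn Zᶜ z) :=
  Iff.rfl

theorem subset_fullHull : Z ⊆ fullHull Z := fun z hz ↦ by
  simp [mem_fullHull, connectedComponentIn_eq_empty (notMem_compl_iff.2 hz)]

theorem mem_fullHull_iff_of_mem_connectedComponentIn (hw : w ∈ connectedComponentIn Zᶜ z) :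
    w ∈ fullHull Z ↔ z ∈ fullHull Z := by
  rw [mem_fullHull, mem_fullHull, connectedComponentIn_eq hw]

theorem isClosed_fullHull [LocallyConnectedSpace X] (hZ : IsClosed Z) :
    IsClosed (fullHull Z) := by
  refine isOpen_compl_iff.1 (isOpen_iff_mem_nhds.2 fun z hz ↦ ?_)
  have hzZ : z ∈ Zᶜ := fun h ↦ hz (subset_fullHull h)
  filter_upwards [connectedComponentIn_mem_nhds (hZ.isOpen_compl.mem_nhds hzZ)] with w hw
  rwa [mem_compl_iff, mem_fullHull_iff_of_mem_connectedComponentIn hw]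

theorem isOpen_fullHull_sdiff [LocallyConnectedSpace X] (hZ : IsClosed Z) :
    IsOpen (fullHull Z \ Z) := by
  refine isOpen_iff_mem_nhds.2 fun z ⟨hz, hzZ⟩ ↦ ?_
  filter_upwards [connectedComponentIn_mem_nhds (hZ.isOpen_compl.mem_nhds hzZ)] with w hw
  exact ⟨(mem_fullHull_iff_of_mem_connectedComponentIn hw).2 hz,
    connectedComponentIn_subset _ _ hw⟩

theorem subset_fullHull_of_frontier_subset (hT : IsBounded T) (hTZ : frontier T ⊆ Z) :
    T ⊆ fullHull Z := by
  intro z hz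
  by_cases hzZ : z ∈ Z
  · exact subset_fullHull hzZ
  have hdisj : Disjoint (connectedComponentIn Zᶜ z) (frontier T) :=
    disjoint_compl_left.mono (connectedComponentIn_subset _ _) hTZ
  exact mem_fullHull.2 <| hT.subset (subset_of_isPreconnected_of_disjoint_frontier
    isPreconnected_connectedComponentIn ⟨z, mem_connectedComponentIn hzZ, hz⟩ hdisj)

end PseudoMetricSpace

section NormedSpace

variable {E : Type*} [NormedAddCommGroup E] [NormedSpace ℝ E] {Z : Set E}

theorem fullHull_subset_closedBall (h : 1 < Module.rank ℝ E) {x : E} {r : ℝ}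
    (hZ : Z ⊆ closedBall x r) : fullHull Z ⊆ closedBall x r := by
  have : Nontrivial E := rank_pos_iff_nontrivial.1 (zero_lt_one.trans h)
  intro z hz
  by_contra hzr
  have hbdd : IsBounded (closedBall x r)ᶜ :=
    (mem_fullHull.1 hz).subset <|
      (isPreconnected_compl_closedBall h x r).subset_connectedComponentIn hzr
        (compl_subset_compl.2 hZ)
  exact NormedSpace.unbounded_univ ℝ E
    (union_compl_self (closedBall x r) ▸ isBounded_closedBall.union hbdd)

theorem isCompact_fullHull [ProperSpace E] (h : 1 < Module.rank ℝ E) (hZ : IsCompact Z) :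
    IsCompact (fullHull Z) := by
  obtain ⟨r, hr⟩ := hZ.isBounded.subset_closedBall 0
  exact (isCompact_closedBall 0 r).of_isClosed_subset (isClosed_fullHull hZ.isClosed)
    (fullHull_subset_closedBall h hr)

theorem isConnected_compl_fullHull (h : 1 < Module.rank ℝ E) (hZ : IsBounded Z) :
    IsConnected (fullHull Z)ᶜ := by
  have : Nontrivial E := rank_pos_iff_nontrivial.1 (zero_lt_one.trans h)
  obtain ⟨r, hr⟩ := hZ.subset_closedBall 0
  obtain ⟨p, hp⟩ : (closedBall (0 : E) r)ᶜ.Nonempty :=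
    nonempty_compl.2 fun hu ↦ NormedSpace.unbounded_univ ℝ E (hu ▸ isBounded_closedBall)
  refine ⟨⟨p, fun hpZ ↦ hp (fullHull_subset_closedBall h hr hpZ)⟩,
    isPreconnected_of_forall p fun z hz ↦ ⟨connectedComponentIn Zᶜ z, ?_, ?_, ?_,
      isPreconnected_connectedComponentIn⟩⟩
  · exact fun w hw hwZ ↦ hz ((mem_fullHull_iff_of_mem_connectedComponentIn hw).1 hwZ)
  · obtain ⟨w, hwz, hwr⟩ := not_subset.1 fun hsub ↦
      hz (mem_fullHull.2 (isBounded_closedBall.subset hsub))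
    rw [connectedComponentIn_eq hwz]
    exact (isPreconnected_compl_closedBall h 0 r).subset_connectedComponentIn hwr
      (compl_subset_compl.2 hr) hp
  · exact mem_connectedComponentIn fun hzZ ↦ hz (subset_fullHull hzZ)

end NormedSpace

section Maps

variable {X Y : Type*} {g : X → Y} {W : Set Y}

theorem mapsTo_fullHull [PseudoMetricSpace X] [MetricSpace Y] {Z : Set X}
    (hZ : IsCompact (fullHull Z)) (hg : ContinuousOn g (fullHull Z))
    (hopen : IsOpen (g '' (fullHull Z \ Z))) (hmaps : MapsTo g Z W) :
    MapsTo g (fullHull Z) (fullHull W) := by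
  have hcomp : IsCompact (g '' fullHull Z) := hZ.image_of_continuousOn hg
  refine mapsTo_iff_image_subset.2 (subset_fullHull_of_frontier_subset hcomp.isBounded ?_)
  calc frontier (g '' fullHull Z)
    _ ⊆ g '' fullHull Z \ g '' (fullHull Z \ Z) :=
      frontier_subset_sdiff_of_isOpen hcomp.isClosed hopen (image_mono sdiff_subset)
    _ ⊆ g '' Z := by
      rintro _ ⟨⟨z, hz, rfl⟩, hgz⟩
      by_contra hzZ
      exact hgz ⟨z, ⟨hz, fun h ↦ hzZ ⟨z, h, rfl⟩⟩, rfl⟩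
    _ ⊆ W := hmaps.image_subset

theorem inter_preimage_fullHull_subset [MetricSpace X] [PseudoMetricSpace Y]
    [LocallyConnectedSpace Y] {V : Set X} (hV : IsOpen V) (hg : ContinuousOn g V)
    (hW : IsClosed W) (hcomp : IsCompact (V ∩ g ⁻¹' fullHull W)) :
    V ∩ g ⁻¹' fullHull W ⊆ fullHull (V ∩ g ⁻¹' W) := by
  refine subset_fullHull_of_frontier_subset hcomp.isBounded ?_
  calc frontier (V ∩ g ⁻¹' fullHull W)
    _ ⊆ (V ∩ g ⁻¹' fullHull W) \ (V ∩ g ⁻¹' (fullHull W \ W)) :=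
      frontier_subset_sdiff_of_isOpen hcomp.isClosed
        (hg.isOpen_inter_preimage hV (isOpen_fullHull_sdiff hW))
        (inter_subset_inter_right _ (preimage_mono sdiff_subset))
    _ ⊆ V ∩ g ⁻¹' W := by
      rintro z ⟨⟨hzV, hz⟩, hzW⟩
      exact ⟨hzV, by_contra fun h ↦ hzW ⟨hzV, hz, h⟩⟩

end Maps

end FullHull

theorem exists_continuous_exp_comp_eqOn_compl {X : Type*} [TopologicalSpace X] [NormalSpace X]
    [LocallyPathConnectedSpace X] [SimplyConnectedSpace X] {C : Set X} {f φ : X → ℂ}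
    (hφ : ContinuousOn φ (closure Cᶜ)) (hφ₀ : ∀ x ∉ C, φ x ≠ 0)
    (hf : ContinuousOn f (frontier C)) (hexp : EqOn (Complex.exp ∘ f) φ (frontier C)) :
    ∃ L : X → ℂ, Continuous L ∧ EqOn (Complex.exp ∘ L) φ Cᶜ := by
  classical
  obtain ⟨F, hF⟩ := ContinuousMap.exists_restrict_eq isClosed_frontier ⟨_, hf.domRestrict⟩
  have hFf (x : X) (hx : x ∈ frontier C) : F x = f x := DFunLike.congr_fun hF ⟨x, hx⟩
  let ψ : X → ℂ := C.piecewise (Complex.exp ∘ F) φ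
  have hψ : Continuous ψ :=
    continuous_piecewise (fun x hx ↦ by simpa [hFf x hx] using hexp hx) (by fun_prop) hφ
  have hψ₀ (x : X) : ψ x ≠ 0 := by
    by_cases hx : x ∈ C
    · simp [ψ, hx]
    · simpa [ψ, hx] using hφ₀ x hx
  have huniv : IsSimplyConnected (univ : Set X) :=
    (Homeomorph.Set.univ X).toHomotopyEquiv.simplyConnectedSpace_iff.2 inferInstance
  obtain ⟨L, hL, hLψ⟩ := Complex.exists_continuousOn_eqOn_exp_comp huniv isOpen_univ
    hψ.continuousOn (by simpa using hψ₀)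
  exact ⟨L, continuousOn_univ.1 hL, fun x hx ↦
    (hLψ (mem_univ x)).trans (piecewise_eq_of_notMem _ _ _ hx)⟩

theorem not_exists_continuousOn_log_sub_sphere (a : ℂ) {r : ℝ} (hr : 0 ≤ r) :
    ¬ ∃ L : ℂ → ℂ, ContinuousOn L (sphere a r) ∧
      EqOn (Complex.exp ∘ L) (fun z ↦ z - a) (sphere a r) := by
  rintro ⟨L, hL, hexp⟩
  let F : ℝ → ℂ := fun θ ↦ L (circleMap a r θ) - θ * Complex.I
  have hF : Continuous F :=
    (hL.comp_continuous (continuous_circleMap a r) (circleMap_mem_sphere a hr)).sub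
      (by fun_prop)
  have hexpF (θ : ℝ) : Complex.exp (F θ) = r := by
    have := hexp (circleMap_mem_sphere a hr θ)
    simp only [comp_apply, circleMap_sub_center, circleMap_zero] at this
    rw [Complex.exp_sub, this, mul_div_cancel_right₀ _ (Complex.exp_ne_zero _)]
  have hconst : F (2 * Real.pi) = F 0 :=
    Complex.isCoveringMap_exp.const_of_comp hF (fun θ θ' ↦ by simp only [hexpF]) _ _
  have hperiod : circleMap a r (2 * Real.pi) = circleMap a r 0 := by
    simpa using periodic_circleMap a r 0
  simp [F, hperiod] at hconst

theorem fullHull_subset_of_isSimplyConnected {V Z : Set ℂ} (hV : IsSimplyConnected V)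
    (hVo : IsOpen V) (hZ : IsClosed Z) (hZV : Z ⊆ V) : fullHull Z ⊆ V := by
  intro a ha
  by_contra haV
  have haZ : a ∈ Zᶜ := fun h ↦ haV (hZV h)
  set C := connectedComponentIn Zᶜ a
  have hfrontier : frontier C ⊆ V :=
    (disjoint_compl_right_iff_subset.1
      (disjoint_frontier_connectedComponentIn hZ.isOpen_compl a)).trans hZV
  have hne : 0 ∉ (fun z ↦ z - a) '' V := by
    rintro ⟨z, hz, hza⟩
    exact haV (sub_eq_zero.1 hza ▸ hz)
  obtain ⟨f, hf, hfexp⟩ := Complex.exists_continuousOn_eqOn_exp_comp hV hVo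
    (g := fun z ↦ z - a) (by fun_prop) hne
  obtain ⟨L, hL, hLexp⟩ := exists_continuous_exp_comp_eqOn_compl (C := C) (φ := fun z ↦ z - a)
    (by fun_prop) (fun z hz hza ↦ hz (sub_eq_zero.1 hza ▸ mem_connectedComponentIn haZ))
    (hf.mono hfrontier) (hfexp.mono hfrontier)
  obtain ⟨r, hr, hCr⟩ := (mem_fullHull.1 ha).subset_ball_lt 0 a
  have hsphere : sphere a r ⊆ Cᶜ :=
    (sphere_disjoint_ball.mono_right hCr).subset_compl_right
  exact not_exists_continuousOn_log_sub_sphere a hr.le ⟨L, hL.continuousOn, hLexp.mono hsphere⟩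

theorem ProperOn.isOpen_image {g : ℂ → ℂ} {U' U : Set ℂ} (hproper : ProperOn g U' U)
    (hU'o : IsOpen U') (hU'c : IsPreconnected U') (hg : DifferentiableOn ℂ g U')
    (hmaps : MapsTo g U' U) {s : Set ℂ} (hsU' : s ⊆ U') (hs : IsOpen s) : IsOpen (g '' s) := by
  rcases s.eq_empty_or_nonempty with rfl | ⟨z, hz⟩
  · simp
  rcases (hg.analyticOnNhd hU'o).is_constant_or_isOpen hU'c with ⟨w, hw⟩ | hopen
  · have hwU : w ∈ U := hw z (hsU' hz) ▸ hmaps (hsU' hz)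
    have hcomp : IsCompact U' := by
      have hU' : U' ∩ g ⁻¹' {w} = U' := inter_eq_left.2 hw
      exact hU' ▸ hproper {w} (singleton_subset_iff.2 hwU) isCompact_singleton
    have huniv : U' = univ :=
      IsClopen.eq_univ ⟨hcomp.isClosed, hU'o⟩ ⟨z, hsU' hz⟩
    exact absurd huniv hcomp.ne_univ
  · exact hopen s hsU' hs

theorem ProperOn.inter_preimage_fullHull_eq {g : ℂ → ℂ} {U' U Z : Set ℂ}
    (hproper : ProperOn g U' U) (hU'o : IsOpen U') (hg : ContinuousOn g U')
    (hopen : ∀ s ⊆ U', IsOpen s → IsOpen (g '' s)) (hZ : IsCompact Z)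
    (hZU' : fullHull Z ⊆ U') (hZU : fullHull Z ⊆ U) (hZinv : U' ∩ g ⁻¹' Z = Z) :
    U' ∩ g ⁻¹' fullHull Z = fullHull Z := by
  have hcomp : IsCompact (fullHull Z) := isCompact_fullHull (by simp) hZ
  refine Subset.antisymm ?_ (subset_inter hZU' ?_)
  · simpa only [hZinv] using
      inter_preimage_fullHull_subset hU'o hg hZ.isClosed (hproper _ hZU hcomp)
  · exact mapsTo_fullHull hcomp (hg.mono hZU')
      (hopen _ (sdiff_subset.trans hZU') (isOpen_fullHull_sdiff hZ.isClosed))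
      (hZinv.ge.trans inter_subset_right)

theorem invariant_compact_subset_maximal_general {g : ℂ → ℂ} {U' U : Set ℂ}
    (hU'o : IsOpen U') (hU's : IsSimplyConnected U') (hU'U : U' ⊆ U)
    (hg : ContinuousOn g U') (hopen : ∀ s ⊆ U', IsOpen s → IsOpen (g '' s))
    (hproper : ProperOn g U' U) {Kstar : Set ℂ}
    (hKmax : ∀ K : Set ℂ, K ⊆ U → IsCompact K → IsConnected Kᶜ →
      U' ∩ g ⁻¹' K = K → K ⊆ Kstar)
    {Z : Set ℂ} (hZcomp : IsCompact Z) (hZinv : U' ∩ g ⁻¹' Z = Z) :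
    Z ⊆ Kstar := by
  have hhullU' : fullHull Z ⊆ U' :=
    fullHull_subset_of_isSimplyConnected hU's hU'o hZcomp.isClosed (hZinv ▸ inter_subset_left)
  have hhullU : fullHull Z ⊆ U := hhullU'.trans hU'U
  have hhullcomp : IsCompact (fullHull Z) := isCompact_fullHull (by simp) hZcomp
  have hhullfull : IsConnected (fullHull Z)ᶜ :=
    isConnected_compl_fullHull (by simp) hZcomp.isBounded
  have hhullinv : U' ∩ g ⁻¹' fullHull Z = fullHull Z :=
    hproper.inter_preimage_fullHull_eq hU'o hg hopen hZcomp hhullU' hhullU hZinv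
  exact subset_fullHull.trans (hKmax _ hhullU hhullcomp hhullfull hhullinv)

/-- **Theorem.** If `K* ⊆ U` is the maximal full compact set with `g⁻¹(K*) = K*`, then any
compact set `Z` (not necessarily full) with `g⁻¹(Z) = Z` satisfies `Z ⊆ K*`. -/
theorem invariant_compact_subset_maximal {g : ℂ → ℂ} {U' U : Set ℂ} {d : ℕ}
    (H : PLSetting g U' U d) {Kstar : Set ℂ}
    (hKU : Kstar ⊆ U) (hKcomp : IsCompact Kstar) (hKfull : IsConnected Kstarᶜ)
    (hKinv : U' ∩ g ⁻¹' Kstar = Kstar)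
    (hKmax : ∀ K : Set ℂ, K ⊆ U → IsCompact K → IsConnected Kᶜ →
      U' ∩ g ⁻¹' K = K → K ⊆ Kstar)
    {Z : Set ℂ} (hZcomp : IsCompact Z) (hZinv : U' ∩ g ⁻¹' Z = Z) :
    Z ⊆ Kstar :=
  invariant_compact_subset_maximal_general H.disk'.1 H.disk'.2.2 H.subset H.holo.continuousOn
    (fun _ ↦ H.proper.isOpen_image H.disk'.1 H.disk'.2.1.isPreconnected H.holo H.mapsTo)
    H.proper hKmax hZcomp hZinv
end
end
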